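/- There exist a constant c > 0 and a threshold d₀ ∈ ℕ such that for every dimension d ≥ d₀, every δ ∈ [0,1], and every M-bit memory-constrained deterministic first-order algorithm that, using T queries, is guaranteed to minimize 1-Lipschitz convex functions over the unit ball of ℝ^d with accuracy ε = 1/d⁴, one has: either M ≥ d^{2−δ} or T ≥ c · d^{1+δ/3} / (log d)^{5/3}. -/

import Mathlib

open scoped RealInnerProductSpace

/-- An `M`-bit memory-constrained deterministic algorithm interacting with an oracle
with query space `S` and response space `R`: a query function and an update function. -/
structure MemAlg (M : ℕ) (S R : Type) where
  query : (Fin M → Bool) → S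
  update : (Fin M → Bool) → S → R → (Fin M → Bool)

namespace MemAlg

variable {M : ℕ} {S R : Type}

/-- The memory state after `t` iterations, interacting with the oracle `O`;
the initial memory state is `0^M`. -/
def mem (alg : MemAlg M S R) (O : S → R) : ℕ → (Fin M → Bool)
  | 0 => fun _ => false
  | t + 1 =>
      alg.update (alg.mem O t) (alg.query (alg.mem O t)) (O (alg.query (alg.mem O t)))

/-- The output of the algorithm after `T` queries: its last query
`q_T = ψ_query (Memory_{T-1})`. -/
def output (alg : MemAlg M S R) (O : S → R) (T : ℕ) : S :=
  alg.query (alg.mem O (T - 1))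

end MemAlg

/-- `O` is a first-order oracle for `f`: it returns the value of `f` together with a
subgradient of `f` at the query point. -/
def IsFirstOrderOracle {d : ℕ} (f : EuclideanSpace ℝ (Fin d) → ℝ)
    (O : EuclideanSpace ℝ (Fin d) → ℝ × EuclideanSpace ℝ (Fin d)) : Prop :=
  ∀ x, (O x).1 = f x ∧ ∀ y, f x + ⟪(O x).2, y - x⟫ ≤ f y

/-- The algorithm `alg`, using `T` queries, is guaranteed to minimize `1`-Lipschitz convex
functions over the unit ball of `ℝ^d` with accuracy `ε`: for every convex `1`-Lipschitz
`f` and every first-order oracle for `f`, the output lies in the unit ball and is an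
`ε`-approximate minimizer of `f` over the unit ball. -/
def MinimizesConvex {M : ℕ} (d : ℕ)
    (alg : MemAlg M (EuclideanSpace ℝ (Fin d)) (ℝ × EuclideanSpace ℝ (Fin d)))
    (T : ℕ) (ε : ℝ) : Prop :=
  ∀ f : EuclideanSpace ℝ (Fin d) → ℝ,
    ConvexOn ℝ Set.univ f → LipschitzWith 1 f →
      ∀ O : EuclideanSpace ℝ (Fin d) → ℝ × EuclideanSpace ℝ (Fin d),
        IsFirstOrderOracle f O →
          alg.output O T ∈ Metric.closedBall (0 : EuclideanSpace ℝ (Fin d)) 1 ∧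
          ∀ x ∈ Metric.closedBall (0 : EuclideanSpace ℝ (Fin d)) 1,
            f (alg.output O T) ≤ f x + ε

/-!
The hard functions are maxima of `‖x‖ - 1`, of `|⟪aᵢ, x⟫| - η` for rows `aᵢ` on a scaled grid, and
of probes `η (⟪vⱼ, x⟫ - offset j)`, where `vⱼ` is a difference of random sign vectors. The probes
are revealed one at a time: the `j`-th becomes visible after `j` exploratory queries, that is,
queries nearly orthogonal to all rows and far from the span of the current block of `k` earlier
exploratory queries. The increasing offsets make the gradual run agree with a run against the full
oracle.

Since the probes are generic, a point at which the maximum is nearly minimal forces the algorithm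
to have made `k * P + 1` exploratory queries. If `T ≤ P * m`, some block of `k` of them is made
within `m` steps, so it is determined by the `M` bits of memory at its beginning together with the
`m` answers, which name at most `m` rows. All other rows are nearly orthogonal to `k` robustly
independent vectors, and few grid vectors are. Counting pairs of rows and probes therefore gives a
contradiction unless `M` is at least of order `k d log d`. The construction allows every `P` with
`P³ k log d` of order at most `d`, and optimizing over `k` and `P` yields the trade-off.
-/

open scoped Finset

section FirstOrderOracle

variable {d : ℕ} {f : EuclideanSpace ℝ (Fin d) → ℝ}
  {O : EuclideanSpace ℝ (Fin d) → ℝ × EuclideanSpace ℝ (Fin d)}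

lemma IsFirstOrderOracle.convexOn (hO : IsFirstOrderOracle f O) : ConvexOn ℝ Set.univ f := by
  refine ⟨convex_univ, fun x _ y _ a b ha hb hab ↦ ?_⟩
  set z := a • x + b • y with hz
  set g := (O z).2
  have hzero : a * ⟪g, x - z⟫ + b * ⟪g, y - z⟫ = 0 := by
    rw [← inner_smul_right, ← inner_smul_right, ← inner_add_right, smul_sub, smul_sub,
      sub_add_sub_comm, ← hz, ← add_smul, hab, one_smul, sub_self, inner_zero_right]
  calc f z = a * (f z + ⟪g, x - z⟫) + b * (f z + ⟪g, y - z⟫) := by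
        linear_combination -hzero - f z * hab
    _ ≤ a • f x + b • f y := by
        simp only [smul_eq_mul]
        gcongr
        exacts [(hO z).2 x, (hO z).2 y]

lemma IsFirstOrderOracle.lipschitzWith {K : NNReal} (hO : IsFirstOrderOracle f O)
    (hK : ∀ x, ‖(O x).2‖ ≤ K) : LipschitzWith K f := by
  refine LipschitzWith.of_le_add_mul K fun x y ↦ ?_
  have hinner : -⟪(O x).2, y - x⟫ ≤ K * dist x y := calc
    -⟪(O x).2, y - x⟫ ≤ ‖(O x).2‖ * ‖y - x‖ :=
        (neg_le_abs _).trans (abs_real_inner_le_norm _ _)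
    _ ≤ K * dist x y := by
        rw [dist_eq_norm_sub', ← dist_eq_norm]
        gcongr
        exact hK x
  linarith [(hO x).2 y]

end FirstOrderOracle

/-! ### Random sign vectors -/

section SignVec

variable {ι : Type*} [Fintype ι]

/-- The sign `±1` encoded by a Boolean. -/
def boolSign (b : Bool) : ℝ := if b then 1 else -1

/-- The unit vector `d^{-1/2} (±1, …, ±1)` of `ℝ^ι`, `d = card ι`, with the signs prescribed by
`s`. Probabilities over a random sign vector are counts over all `s`. -/
noncomputable def signVec (s : ι → Bool) : EuclideanSpace ℝ ι :=
  WithLp.toLp 2 fun i ↦ boolSign (s i) / √(Fintype.card ι)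

lemma boolSign_sq (b : Bool) : boolSign b ^ 2 = 1 := by
  cases b <;> norm_num [boolSign]

lemma boolSign_not (b : Bool) : boolSign (!b) = -boolSign b := by
  cases b <;> norm_num [boolSign]

lemma inner_signVec (s : ι → Bool) (w : EuclideanSpace ℝ ι) :
    ⟪signVec s, w⟫ = ∑ i, boolSign (s i) / √(Fintype.card ι) * w i := by
  simp [signVec, PiLp.inner_apply, mul_comm]

lemma norm_signVec [Nonempty ι] (s : ι → Bool) : ‖signVec s‖ = 1 := by
  refine (pow_eq_one_iff_of_nonneg (norm_nonneg _) two_ne_zero).mp ?_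
  simp [EuclideanSpace.norm_sq_eq, signVec, div_pow, boolSign_sq]

variable [DecidableEq ι]

lemma sum_exp_inner_signVec_le (w : EuclideanSpace ℝ ι) :
    ∑ s : ι → Bool, Real.exp ⟪signVec s, w⟫ ≤
      2 ^ Fintype.card ι * Real.exp (‖w‖ ^ 2 / (2 * Fintype.card ι)) := by
  set D := (Fintype.card ι : ℝ)
  have hcoord (i : ι) : ∑ b, Real.exp (boolSign b / √D * w i) ≤
      2 * Real.exp (w i ^ 2 / (2 * D)) := calc
    _ = 2 * Real.cosh (w i / √D) := by
      rw [Real.cosh_eq, Fintype.sum_bool]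
      simp only [boolSign, if_true, Bool.false_eq_true, if_false]
      ring_nf
    _ ≤ 2 * Real.exp ((w i / √D) ^ 2 / 2) := by gcongr; exact Real.cosh_le_exp_half_sq _
    _ = _ := by rw [div_pow, Real.sq_sqrt (Nat.cast_nonneg _), div_div, mul_comm D]
  calc ∑ s : ι → Bool, Real.exp ⟪signVec s, w⟫
      = ∏ i, ∑ b, Real.exp (boolSign b / √D * w i) := by
        simp_rw [inner_signVec, Real.exp_sum]
        rw [← Fintype.prod_sum fun i b ↦ Real.exp (boolSign b / √D * w i)]
    _ ≤ ∏ i, (2 * Real.exp (w i ^ 2 / (2 * D))) :=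
        Finset.prod_le_prod (fun i _ ↦ by positivity) fun i _ ↦ hcoord i
    _ = 2 ^ Fintype.card ι * Real.exp (‖w‖ ^ 2 / (2 * D)) := by
        simp [Finset.prod_mul_distrib, ← Real.exp_sum, ← Finset.sum_div,
          EuclideanSpace.norm_sq_eq]

lemma card_le_inner_signVec_mul_exp_le (w : EuclideanSpace ℝ ι) (a : ℝ) :
    (#{s : ι → Bool | a ≤ ⟪signVec s, w⟫} : ℝ) * Real.exp a ≤
      2 ^ Fintype.card ι * Real.exp (‖w‖ ^ 2 / (2 * Fintype.card ι)) := by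
  rw [← nsmul_eq_mul]
  exact (Finset.card_nsmul_le_sum _ _ _ fun s hs ↦
      Real.exp_le_exp.mpr (Finset.mem_filter.mp hs).2).trans
    ((Finset.sum_le_univ_sum_of_nonneg fun s ↦ (Real.exp_pos _).le).trans
      (sum_exp_inner_signVec_le w))

lemma card_lt_inner_signVec_le [Nonempty ι] (w : EuclideanSpace ℝ ι) {t : ℝ} (ht : 0 ≤ t) :
    (#{s : ι → Bool | t / √(Fintype.card ι) * ‖w‖ < ⟪signVec s, w⟫} : ℝ) ≤
      2 ^ Fintype.card ι * Real.exp (-(t ^ 2 / 2)) := by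
  have hD : (0 : ℝ) < Fintype.card ι := by exact_mod_cast Fintype.card_pos
  set D := (Fintype.card ι : ℝ)
  rcases eq_or_ne w 0 with rfl | hw
  · simp only [norm_zero, mul_zero, inner_zero_right, lt_self_iff_false, Finset.filter_false,
      Finset.card_empty, Nat.cast_zero]
    positivity
  have := norm_pos_iff.mpr hw
  -- `l` is the exponential tilt that minimises the Chernoff bound.
  set l : ℝ := t * √D / ‖w‖ with hl
  have : 0 ≤ l := by positivity
  have hnorm : ‖l • w‖ ^ 2 / (2 * D) = t ^ 2 / 2 := by
    rw [norm_smul, mul_pow, Real.norm_eq_abs, sq_abs, hl, div_pow, mul_pow, Real.sq_sqrt hD.le]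
    field_simp
  have hsub : #{s : ι → Bool | t / √D * ‖w‖ < ⟪signVec s, w⟫} ≤
      #{s : ι → Bool | t ^ 2 ≤ ⟪signVec s, l • w⟫} := by
    refine Finset.card_le_card (Finset.monotone_filter_right _ fun s _ hs ↦ ?_)
    calc t ^ 2 = l * (t / √D * ‖w‖) := by rw [hl]; field_simp
      _ ≤ ⟪signVec s, l • w⟫ := by rw [inner_smul_right]; gcongr
  have hchernoff := card_le_inner_signVec_mul_exp_le (l • w) (t ^ 2)
  rw [hnorm] at hchernoff
  calc (#{s : ι → Bool | t / √D * ‖w‖ < ⟪signVec s, w⟫} : ℝ)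
      ≤ #{s : ι → Bool | t ^ 2 ≤ ⟪signVec s, l • w⟫} := by exact_mod_cast hsub
    _ ≤ 2 ^ Fintype.card ι * Real.exp (t ^ 2 / 2) / Real.exp (t ^ 2) := by
        rwa [le_div_iff₀ (Real.exp_pos _)]
    _ = 2 ^ Fintype.card ι * Real.exp (-(t ^ 2 / 2)) := by
        rw [mul_div_assoc, ← Real.exp_sub]
        ring_nf

lemma card_lt_abs_inner_signVec_le [Nonempty ι] (w : EuclideanSpace ℝ ι) {t : ℝ} (ht : 0 ≤ t) :
    (#{s : ι → Bool | t / √(Fintype.card ι) * ‖w‖ < |⟪signVec s, w⟫|} : ℝ) ≤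
      2 ^ Fintype.card ι * (2 * Real.exp (-(t ^ 2 / 2))) := by
  have hpos := card_lt_inner_signVec_le w ht
  have hneg := card_lt_inner_signVec_le (-w) ht
  simp only [norm_neg, inner_neg_right] at hneg
  have hunion : (#{s : ι → Bool | t / √(Fintype.card ι) * ‖w‖ < |⟪signVec s, w⟫|} : ℝ) ≤
      #{s : ι → Bool | t / √(Fintype.card ι) * ‖w‖ < ⟪signVec s, w⟫} +
        #{s : ι → Bool | t / √(Fintype.card ι) * ‖w‖ < -⟪signVec s, w⟫} := by
    simp only [lt_abs, Finset.filter_or]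
    exact_mod_cast Finset.card_union_le _ _
  linarith

lemma sum_boolSign_mul_boolSign (i j : ι) :
    ∑ s : ι → Bool, boolSign (s i) * boolSign (s j) =
      if i = j then 2 ^ Fintype.card ι else 0 := by
  split_ifs with hij
  · subst hij
    simp [← sq, boolSign_sq]
  · refine Finset.sum_ninvolution (fun s ↦ Function.update s i (!s i)) (fun s ↦ ?_)
      (fun s _ ↦ ?_) (fun _ ↦ Finset.mem_univ _) fun s ↦ by simp
    · simp [Function.update_of_ne (Ne.symm hij), boolSign_not]
    · intro hfix
      simpa using congrFun hfix i

lemma sum_inner_signVec_sq (w : EuclideanSpace ℝ ι) :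
    ∑ s : ι → Bool, ⟪signVec s, w⟫ ^ 2 = 2 ^ Fintype.card ι * ‖w‖ ^ 2 / Fintype.card ι := by
  set D := (Fintype.card ι : ℝ)
  have hexpand (s : ι → Bool) : ⟪signVec s, w⟫ ^ 2 =
      ∑ i, ∑ j, w i * w j / D * (boolSign (s i) * boolSign (s j)) := by
    rw [inner_signVec, sq, Finset.sum_mul_sum]
    refine Finset.sum_congr rfl fun i _ ↦ Finset.sum_congr rfl fun j _ ↦ ?_
    have hD : √D * √D = D := Real.mul_self_sqrt (Nat.cast_nonneg _)
    rw [← hD]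
    ring
  simp_rw [hexpand]
  rw [Finset.sum_comm]
  simp_rw [Finset.sum_comm (s := (Finset.univ : Finset (ι → Bool))), ← Finset.mul_sum,
    sum_boolSign_mul_boolSign]
  simp only [mul_ite, mul_zero, Finset.sum_ite_eq, Finset.mem_univ, if_true,
    EuclideanSpace.norm_sq_eq, Real.norm_eq_abs, sq_abs, Finset.mul_sum, Finset.sum_div]
  exact Finset.sum_congr rfl fun i _ ↦ by ring

end SignVec

section Projection

variable {E : Type*} [NormedAddCommGroup E] [InnerProductSpace ℝ E]

lemma norm_sq_eq_norm_sq_starProjection_add (U : Submodule ℝ E) [U.HasOrthogonalProjection]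
    (v : E) : ‖v‖ ^ 2 = ‖U.starProjection v‖ ^ 2 + ‖v - U.starProjection v‖ ^ 2 := by
  rw [Submodule.norm_sq_eq_add_norm_sq_starProjection v U, ← U.starProjection_orthogonal_val]

lemma norm_starProjection_sq_eq_sum (U : Submodule ℝ E) [FiniteDimensional ℝ U] (v : E) :
    ‖U.starProjection v‖ ^ 2 = ∑ i, ⟪v, (stdOrthonormalBasis ℝ U i : E)⟫ ^ 2 := by
  rw [Submodule.starProjection_apply, ← Submodule.coe_norm,
    ← (stdOrthonormalBasis ℝ U).sum_sq_norm_inner_right]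
  refine Finset.sum_congr rfl fun i _ ↦ ?_
  rw [Submodule.inner_orthogonalProjectionOnto_eq_of_mem_left, real_inner_comm, Real.norm_eq_abs,
    sq_abs]

lemma norm_coe_stdOrthonormalBasis (U : Submodule ℝ E) [FiniteDimensional ℝ U]
    (i : Fin (Module.finrank ℝ U)) : ‖(stdOrthonormalBasis ℝ U i : E)‖ = 1 :=
  (stdOrthonormalBasis ℝ U).orthonormal.1 i

lemma abs_inner_le_of_abs_inner_stdOrthonormalBasis_le (U : Submodule ℝ E)
    [FiniteDimensional ℝ U] {v y : E} {w : ℝ}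
    (hv : ∀ i, |⟪v, (stdOrthonormalBasis ℝ U i : E)⟫| ≤ w) (hw : 0 ≤ w) (hy : y ∈ U) :
    |⟪v, y⟫| ≤ √(Module.finrank ℝ U) * w * ‖y‖ := by
  have hproj : ‖U.starProjection v‖ ≤ √(Module.finrank ℝ U) * w := by
    refine le_of_sq_le_sq ?_ (by positivity)
    rw [norm_starProjection_sq_eq_sum, mul_pow, Real.sq_sqrt (Nat.cast_nonneg _)]
    calc ∑ i, ⟪v, (stdOrthonormalBasis ℝ U i : E)⟫ ^ 2
        ≤ ∑ _i : Fin (Module.finrank ℝ U), w ^ 2 :=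
          Finset.sum_le_sum fun i _ ↦ sq_le_sq' (abs_le.mp (hv i)).1 (abs_le.mp (hv i)).2
      _ = Module.finrank ℝ U * w ^ 2 := by simp
  calc |⟪v, y⟫| = |⟪U.starProjection v, y⟫| := by
        rw [U.inner_starProjection_left_eq_right, Submodule.starProjection_eq_self_iff.mpr hy]
    _ ≤ ‖U.starProjection v‖ * ‖y‖ := abs_real_inner_le_norm _ _
    _ ≤ √(Module.finrank ℝ U) * w * ‖y‖ := by gcongr

/-- `v` is generic for the vectors in `W` and for the subspaces `S` and `U`: it is `κ`-nearly
orthogonal to `W`, `r`-nearly orthogonal to `S`, and has a component of norm at least `1 / 2`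
orthogonal to `U`. -/
structure IsGeneric (W : Set E) (S U : Submodule ℝ E) [U.HasOrthogonalProjection] (κ r : ℝ)
    (v : E) : Prop where
  abs_inner_le : ∀ x ∈ W, |⟪v, x⟫| ≤ κ * ‖x‖
  abs_inner_le_of_mem : ∀ y ∈ S, |⟪v, y⟫| ≤ r * ‖y‖
  quarter_le_norm_sq : 1 / 4 ≤ ‖v - U.starProjection v‖ ^ 2

end Projection

lemma sq_card_le_card_mul_card_collisions {α β : Type*} [DecidableEq β] {s : Finset α}
    {t : Finset β} {φ : α → β} (hφ : Set.MapsTo φ s t) :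
    #s ^ 2 ≤ #t * #{p ∈ s ×ˢ s | φ p.1 = φ p.2} := by
  have hpairs : #{p ∈ s ×ˢ s | φ p.1 = φ p.2} = ∑ c ∈ t, #{x ∈ s | φ x = c} ^ 2 := by
    rw [Finset.card_eq_sum_card_fiberwise (f := fun p : α × α ↦ φ p.1) (t := t)
      fun p hp ↦ hφ (Finset.mem_product.mp (Finset.mem_filter.mp hp).1).1]
    refine Finset.sum_congr rfl fun c _ ↦ ?_
    rw [sq, ← Finset.card_product]
    congr 1
    ext p
    simp only [Finset.mem_filter, Finset.mem_product]
    grind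
  rw [hpairs, Finset.card_eq_sum_card_fiberwise hφ]
  exact sq_sum_le_card_mul_sum_sq

lemma card_Icc_floor_neg_floor_le {x : ℝ} (hx : 0 ≤ x) :
    (#(Finset.Icc ⌊-x⌋ ⌊x⌋) : ℝ) ≤ 2 * x + 2 := by
  have hle : ⌊-x⌋ ≤ ⌊x⌋ := Int.floor_le_floor (by linarith)
  rw [Int.card_Icc, ← Int.cast_natCast, Int.toNat_of_nonneg (by linarith)]
  push_cast
  linarith [Int.floor_le x, Int.lt_floor_add_one (-x)]

section SignVec

variable {ι : Type*} [Fintype ι]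

/-- The difference of two sign vectors; the probes of the hard instance have this form. -/
noncomputable def signDiff (p : (ι → Bool) × (ι → Bool)) : EuclideanSpace ℝ ι :=
  signVec p.1 - signVec p.2

lemma norm_signDiff_le [Nonempty ι] (p : (ι → Bool) × (ι → Bool)) : ‖signDiff p‖ ≤ 2 := by
  have h := norm_sub_le (signVec p.1) (signVec p.2)
  rwa [norm_signVec, norm_signVec, one_add_one_eq_two] at h

lemma norm_signDiff_sq (p : (ι → Bool) × (ι → Bool)) :
    ‖signDiff p‖ ^ 2 = 4 * hammingDist p.1 p.2 / Fintype.card ι := by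
  have hcoord (i : ι) : ‖signDiff p i‖ ^ 2 =
      if p.1 i ≠ p.2 i then 4 / (Fintype.card ι : ℝ) else 0 := by
    rw [Real.norm_eq_abs, sq_abs]
    simp only [signDiff, signVec, PiLp.sub_apply, ← sub_div, div_pow,
      Real.sq_sqrt (Nat.cast_nonneg _)]
    cases p.1 i <;> cases p.2 i <;> norm_num [boolSign]
  simp_rw [EuclideanSpace.norm_sq_eq, hcoord]
  rw [← Finset.sum_filter, Finset.sum_const, nsmul_eq_mul, hammingDist]
  ring

/-- The cell, of side `w`, that contains the projection of `signVec s` onto `S`, in the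
coordinates of an orthonormal basis of `S`. -/
noncomputable def signCell (S : Submodule ℝ (EuclideanSpace ℝ ι)) (w : ℝ) (s : ι → Bool) :
    Fin (Module.finrank ℝ S) → ℤ :=
  fun i ↦ ⌊⟪signVec s, (stdOrthonormalBasis ℝ S i : EuclideanSpace ℝ ι)⟫ / w⌋

lemma signCell_mem_piFinset [Nonempty ι] (S : Submodule ℝ (EuclideanSpace ℝ ι)) {w : ℝ}
    (hw : 0 < w) (s : ι → Bool) :
    signCell S w s ∈ Fintype.piFinset fun _ ↦ Finset.Icc ⌊-(1 / w)⌋ ⌊1 / w⌋ := by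
  rw [Fintype.mem_piFinset]
  intro i
  have h := abs_real_inner_le_norm (signVec s) (stdOrthonormalBasis ℝ S i : EuclideanSpace ℝ ι)
  rw [norm_coe_stdOrthonormalBasis, norm_signVec, mul_one, abs_le] at h
  rw [← neg_div, Finset.mem_Icc, signCell]
  exact ⟨Int.floor_le_floor (by gcongr; exact h.1), Int.floor_le_floor (by gcongr; exact h.2)⟩

lemma abs_inner_signDiff_le_of_signCell_eq {S : Submodule ℝ (EuclideanSpace ℝ ι)} {w : ℝ}
    (hw : 0 < w) {p : (ι → Bool) × (ι → Bool)} (hcell : signCell S w p.1 = signCell S w p.2)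
    {y : EuclideanSpace ℝ ι} (hy : y ∈ S) :
    |⟪signDiff p, y⟫| ≤ √(Module.finrank ℝ S) * w * ‖y‖ := by
  refine abs_inner_le_of_abs_inner_stdOrthonormalBasis_le S (fun i ↦ ?_) hw.le hy
  have h := Int.abs_sub_lt_one_of_floor_eq_floor (congrFun hcell i)
  rw [← sub_div, ← inner_sub_left, abs_div, abs_of_pos hw, div_lt_one hw] at h
  exact h.le

variable [DecidableEq ι]

lemma sum_norm_starProjection_signVec_sq (U : Submodule ℝ (EuclideanSpace ℝ ι)) :
    ∑ s : ι → Bool, ‖U.starProjection (signVec s)‖ ^ 2 =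
      2 ^ Fintype.card ι * Module.finrank ℝ U / Fintype.card ι := by
  simp_rw [norm_starProjection_sq_eq_sum]
  rw [Finset.sum_comm]
  simp_rw [sum_inner_signVec_sq, norm_coe_stdOrthonormalBasis, Finset.sum_const,
    Finset.card_univ, Fintype.card_fin, nsmul_eq_mul]
  ring

lemma card_lt_norm_starProjection_signVec_sq_mul_le (U : Submodule ℝ (EuclideanSpace ℝ ι))
    (a : ℝ) :
    (#{s : ι → Bool | a < ‖U.starProjection (signVec s)‖ ^ 2} : ℝ) * a ≤
      2 ^ Fintype.card ι * Module.finrank ℝ U / Fintype.card ι := by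
  rw [← nsmul_eq_mul, ← sum_norm_starProjection_signVec_sq]
  exact (Finset.card_nsmul_le_sum _ _ _ fun s hs ↦ (Finset.mem_filter.mp hs).2.le).trans
    (Finset.sum_le_univ_sum_of_nonneg fun s ↦ sq_nonneg _)

lemma sum_pow_hammingDist (s : ι → Bool) (x : ℝ) :
    ∑ s' : ι → Bool, x ^ hammingDist s s' = (1 + x) ^ Fintype.card ι := by
  have hprod (s' : ι → Bool) : x ^ hammingDist s s' = ∏ i, if s i ≠ s' i then x else 1 := by
    simp [hammingDist, Finset.prod_ite]
  simp_rw [hprod]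
  rw [← Fintype.prod_sum fun i b ↦ if s i ≠ b then x else 1]
  have hcoord (i : ι) : ∑ b, (if s i ≠ b then x else 1) = 1 + x := by
    cases s i <;> simp [add_comm]
  rw [Finset.prod_congr rfl fun i _ ↦ hcoord i, Finset.prod_const, Finset.card_univ]

lemma card_norm_signDiff_sq_lt_half_le [Nonempty ι] :
    (#{p : (ι → Bool) × (ι → Bool) | ‖signDiff p‖ ^ 2 < 1 / 2} : ℝ) ≤
      0.76 ^ Fintype.card ι * 4 ^ Fintype.card ι := by
  have hD : (0 : ℝ) < Fintype.card ι := by exact_mod_cast Fintype.card_pos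
  have hweight (p : (ι → Bool) × (ι → Bool)) (hp : ‖signDiff p‖ ^ 2 < 1 / 2) :
      (0.707 : ℝ) ^ Fintype.card ι ≤ (1 / 16) ^ hammingDist p.1 p.2 := by
    rw [norm_signDiff_sq, div_lt_iff₀ hD] at hp
    have hdist : 8 * hammingDist p.1 p.2 ≤ Fintype.card ι := by
      have : 8 * (hammingDist p.1 p.2 : ℝ) ≤ Fintype.card ι := by linarith
      exact_mod_cast this
    calc (0.707 : ℝ) ^ Fintype.card ι ≤ 0.707 ^ (8 * hammingDist p.1 p.2) :=
          pow_le_pow_of_le_one (by norm_num) (by norm_num) hdist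
      _ = (0.707 ^ 8) ^ hammingDist p.1 p.2 := pow_mul _ _ _
      _ ≤ (1 / 16) ^ hammingDist p.1 p.2 := by gcongr; norm_num
  set close : Finset ((ι → Bool) × (ι → Bool)) := {p | ‖signDiff p‖ ^ 2 < 1 / 2}
  have hmarkov := (Finset.card_nsmul_le_sum close _ _ fun p hp ↦
      hweight p (Finset.mem_filter.mp hp).2).trans
    (Finset.sum_le_univ_sum_of_nonneg fun p ↦ by positivity)
  rw [Fintype.sum_prod_type] at hmarkov
  simp only [sum_pow_hammingDist, Finset.sum_const, nsmul_eq_mul, Finset.card_univ,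
    Fintype.card_fun, Fintype.card_bool, Nat.cast_pow, Nat.cast_ofNat] at hmarkov
  refine le_of_mul_le_mul_right (hmarkov.trans ?_)
    (by positivity : (0 : ℝ) < 0.707 ^ Fintype.card ι)
  rw [← mul_pow, ← mul_pow, ← mul_pow]
  exact pow_le_pow_left₀ (by norm_num) (by norm_num) _

/-- The sign patterns whose vector is nearly orthogonal, at scale `t`, to every element of `W`
and has only a small component in `U`. -/
noncomputable def typicalSigns (W : Finset (EuclideanSpace ℝ ι))
    (U : Submodule ℝ (EuclideanSpace ℝ ι)) (t : ℝ) : Finset (ι → Bool) :=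
  {s | (∀ x ∈ W, |⟪signVec s, x⟫| ≤ t / √(Fintype.card ι) * ‖x‖) ∧
    ‖U.starProjection (signVec s)‖ ^ 2 ≤ 1 / 16}

lemma half_le_card_typicalSigns [Nonempty ι] {W : Finset (EuclideanSpace ℝ ι)}
    {U : Submodule ℝ (EuclideanSpace ℝ ι)} {t : ℝ} (ht : 0 ≤ t)
    (hW : #W * (2 * Real.exp (-(t ^ 2 / 2))) ≤ 1 / 4)
    (hU : Module.finrank ℝ U * 64 ≤ Fintype.card ι) :
    (2 : ℝ) ^ Fintype.card ι / 2 ≤ #(typicalSigns W U t) := by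
  have hD : (0 : ℝ) < Fintype.card ι := by exact_mod_cast Fintype.card_pos
  set far : EuclideanSpace ℝ ι → Finset (ι → Bool) :=
    fun x ↦ {s | t / √(Fintype.card ι) * ‖x‖ < |⟪signVec s, x⟫|}
  set big : Finset (ι → Bool) := {s | 1 / 16 < ‖U.starProjection (signVec s)‖ ^ 2}
  have hcover : Finset.univ ⊆ typicalSigns W U t ∪ (W.biUnion far ∪ big) := by
    intro s _
    simp only [typicalSigns, far, big, Finset.mem_union, Finset.mem_filter, Finset.mem_univ,
      true_and, Finset.mem_biUnion]
    by_contra! h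
    exact (h.1 h.2.1).not_ge h.2.2
  have htotal : (2 : ℝ) ^ Fintype.card ι ≤ #(typicalSigns W U t) + (#(W.biUnion far) + #big) := by
    have h := (Finset.card_le_card hcover).trans ((Finset.card_union_le _ _).trans
      (Nat.add_le_add_left (Finset.card_union_le _ _) _))
    rw [Finset.card_univ, Fintype.card_fun, Fintype.card_bool] at h
    exact_mod_cast h
  have hfar : (#(W.biUnion far) : ℝ) ≤ 2 ^ Fintype.card ι / 4 := calc
    (#(W.biUnion far) : ℝ) ≤ ∑ x ∈ W, (#(far x) : ℝ) := by exact_mod_cast Finset.card_biUnion_le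
    _ ≤ #W * (2 ^ Fintype.card ι * (2 * Real.exp (-(t ^ 2 / 2)))) := by
        rw [← nsmul_eq_mul]
        exact Finset.sum_le_card_nsmul _ _ _ fun x _ ↦ card_lt_abs_inner_signVec_le x ht
    _ ≤ 2 ^ Fintype.card ι / 4 := by
        have := mul_le_mul_of_nonneg_left hW (by positivity : (0 : ℝ) ≤ 2 ^ Fintype.card ι)
        linarith
  have hbig : (#big : ℝ) ≤ 2 ^ Fintype.card ι / 4 := by
    have hmarkov := card_lt_norm_starProjection_signVec_sq_mul_le U (1 / 16)
    rw [le_div_iff₀ hD] at hmarkov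
    have hU' : (Module.finrank ℝ U : ℝ) * 64 ≤ Fintype.card ι := by exact_mod_cast hU
    refine le_of_mul_le_mul_right ?_ hD
    have := mul_le_mul_of_nonneg_left hU' (by positivity : (0 : ℝ) ≤ 2 ^ Fintype.card ι)
    linarith
  linarith

lemma card_collisions_typicalSigns_ge [Nonempty ι] {k B : ℕ} {W : Finset (EuclideanSpace ℝ ι)}
    {U S : Submodule ℝ (EuclideanSpace ℝ ι)} {t w : ℝ} (ht : 0 ≤ t) (hw : 0 < w)
    (hW : #W * (2 * Real.exp (-(t ^ 2 / 2))) ≤ 1 / 4)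
    (hU : Module.finrank ℝ U * 64 ≤ Fintype.card ι)
    (hS : Module.finrank ℝ S ≤ k) (hB : 2 / w + 2 ≤ B) :
    (4 : ℝ) ^ Fintype.card ι / (4 * (B : ℝ) ^ k) ≤
      #{p ∈ typicalSigns W U t ×ˢ typicalSigns W U t | signCell S w p.1 = signCell S w p.2} := by
  set G := typicalSigns W U t
  have hB1 : (1 : ℝ) ≤ B := by linarith [show 0 < 2 / w by positivity]
  set cells := Fintype.piFinset fun _ : Fin (Module.finrank ℝ S) ↦ Finset.Icc ⌊-(1 / w)⌋ ⌊1 / w⌋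
    with hcells_def
  have hcells : (#cells : ℝ) ≤ (B : ℝ) ^ k := by
    rw [hcells_def, Fintype.card_piFinset, Finset.prod_const, Finset.card_univ, Fintype.card_fin,
      Nat.cast_pow]
    have hside := (card_Icc_floor_neg_floor_le (by positivity : 0 ≤ 1 / w)).trans
      ((by ring : 2 * (1 / w) + 2 = 2 / w + 2).trans_le hB)
    exact (pow_le_pow_left₀ (Nat.cast_nonneg _) hside _).trans (pow_le_pow_right₀ hB1 hS)
  have hcoll : (#G : ℝ) ^ 2 ≤
      (B : ℝ) ^ k * #{p ∈ G ×ˢ G | signCell S w p.1 = signCell S w p.2} := by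
    have h := sq_card_le_card_mul_card_collisions (s := G) (t := cells)
      fun s _ ↦ signCell_mem_piFinset S hw s
    calc (#G : ℝ) ^ 2
        ≤ #cells * #{p ∈ G ×ˢ G | signCell S w p.1 = signCell S w p.2} := by exact_mod_cast h
      _ ≤ _ := by gcongr
  have hhalf : (4 : ℝ) ^ Fintype.card ι / 4 ≤ (#G : ℝ) ^ 2 := calc
    _ = ((2 : ℝ) ^ Fintype.card ι / 2) ^ 2 := by
      rw [div_pow, ← pow_mul, mul_comm, pow_mul]; norm_num
    _ ≤ (#G : ℝ) ^ 2 := by gcongr; exact half_le_card_typicalSigns ht hW hU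
  rw [div_le_iff₀ (by positivity)]
  linarith

lemma abs_inner_signDiff_le_of_mem_typicalSigns {W : Finset (EuclideanSpace ℝ ι)}
    {U : Submodule ℝ (EuclideanSpace ℝ ι)} {t : ℝ}
    {p : (ι → Bool) × (ι → Bool)}
    (hp₁ : p.1 ∈ typicalSigns W U t) (hp₂ : p.2 ∈ typicalSigns W U t)
    {x : EuclideanSpace ℝ ι} (hx : x ∈ W) :
    |⟪signDiff p, x⟫| ≤ 2 * (t / √(Fintype.card ι)) * ‖x‖ := by
  have h := (Finset.mem_filter.mp hp₁).2.1 x hx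
  have h' := (Finset.mem_filter.mp hp₂).2.1 x hx
  rw [signDiff, inner_sub_left]
  linarith [abs_sub ⟪signVec p.1, x⟫ ⟪signVec p.2, x⟫]

lemma quarter_le_norm_sub_starProjection_sq {W : Finset (EuclideanSpace ℝ ι)}
    {U : Submodule ℝ (EuclideanSpace ℝ ι)} {t : ℝ}
    {p : (ι → Bool) × (ι → Bool)}
    (hp₁ : p.1 ∈ typicalSigns W U t) (hp₂ : p.2 ∈ typicalSigns W U t)
    (hfar : 1 / 2 ≤ ‖signDiff p‖ ^ 2) :
    1 / 4 ≤ ‖signDiff p - U.starProjection (signDiff p)‖ ^ 2 := by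
  have h := (Finset.mem_filter.mp hp₁).2.2
  have h' := (Finset.mem_filter.mp hp₂).2.2
  have hsmall : ‖U.starProjection (signDiff p)‖ ^ 2 ≤ 1 / 4 := by
    rw [signDiff, map_sub]
    have hpar := parallelogram_law_with_norm ℝ (U.starProjection (signVec p.1))
      (U.starProjection (signVec p.2))
    nlinarith [sq_nonneg ‖U.starProjection (signVec p.1) + U.starProjection (signVec p.2)‖]
  linarith [norm_sq_eq_norm_sq_starProjection_add U (signDiff p)]

open scoped Classical in
-- Conditioning on the cell of the projection onto `S` costs only a factor `B ^ k`, and makes the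
-- difference of two sign vectors far closer to orthogonal to `S` than a typical one.
lemma card_isGeneric_signDiff_ge [Nonempty ι] {k B : ℕ} {W : Finset (EuclideanSpace ℝ ι)}
    {U S : Submodule ℝ (EuclideanSpace ℝ ι)} {t w : ℝ} (ht : 0 ≤ t) (hw : 0 < w)
    (hW : #W * (2 * Real.exp (-(t ^ 2 / 2))) ≤ 1 / 4)
    (hU : Module.finrank ℝ U * 64 ≤ Fintype.card ι)
    (hS : Module.finrank ℝ S ≤ k) (hB : 2 / w + 2 ≤ B)
    (hBd : (0.76 : ℝ) ^ Fintype.card ι ≤ 1 / (8 * (B : ℝ) ^ k)) :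
    (4 : ℝ) ^ Fintype.card ι / (8 * (B : ℝ) ^ k) ≤
      #{p : (ι → Bool) × (ι → Bool) |
        IsGeneric W S U (2 * (t / √(Fintype.card ι))) (√k * w) (signDiff p)} := by
  set n := Fintype.card ι
  set generic : Finset ((ι → Bool) × (ι → Bool)) :=
    {p | IsGeneric W S U (2 * (t / √n)) (√k * w) (signDiff p)}
  set G := typicalSigns W U t
  set colliding := {p ∈ G ×ˢ G | signCell S w p.1 = signCell S w p.2}
  set close : Finset ((ι → Bool) × (ι → Bool)) := {p | ‖signDiff p‖ ^ 2 < 1 / 2}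
  have hsub : colliding \ close ⊆ generic := by
    intro p hp
    simp only [colliding, close, Finset.mem_sdiff, Finset.mem_filter, Finset.mem_product,
      Finset.mem_univ, true_and, not_lt] at hp
    obtain ⟨⟨⟨hp₁, hp₂⟩, hcell⟩, hfar⟩ := hp
    refine Finset.mem_filter.mpr ⟨Finset.mem_univ _,
      fun x hx ↦ abs_inner_signDiff_le_of_mem_typicalSigns hp₁ hp₂ hx, fun y hy ↦ ?_,
      quarter_le_norm_sub_starProjection_sq hp₁ hp₂ hfar⟩
    refine (abs_inner_signDiff_le_of_signCell_eq hw hcell hy).trans ?_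
    gcongr
  have hcard : (#colliding : ℝ) ≤ #generic + #close := by
    have := Finset.le_card_sdiff close colliding
    have := Finset.card_le_card hsub
    exact_mod_cast (by lia : #colliding ≤ #generic + #close)
  have hclose : (#close : ℝ) ≤ 1 / (8 * (B : ℝ) ^ k) * 4 ^ n :=
    card_norm_signDiff_sq_lt_half_le.trans (by gcongr)
  have hsplit : (4 : ℝ) ^ n / (4 * (B : ℝ) ^ k) =
      1 / (8 * (B : ℝ) ^ k) * 4 ^ n + 4 ^ n / (8 * (B : ℝ) ^ k) := by ring
  linarith [card_collisions_typicalSigns_ge ht hw hW hU hS hB]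

end SignVec

/-! ### Grid vectors -/

/-- The vectors `x i` are robustly independent: each one is at distance more than `ρ` from the span
of its predecessors. -/
def RobustlyIndependent {E κ : Type*} [NormedAddCommGroup E] [NormedSpace ℝ E] [Preorder κ]
    (ρ : ℝ) (x : κ → E) : Prop :=
  ∀ i, ∀ y ∈ Submodule.span ℝ (x '' Set.Iio i), ρ < ‖x i - y‖

lemma RobustlyIndependent.comp_strictMono {E κ κ' : Type*} [NormedAddCommGroup E]
    [NormedSpace ℝ E] [Preorder κ] [Preorder κ'] {ρ : ℝ} {x : κ → E} (hx : RobustlyIndependent ρ x)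
    {f : κ' → κ} (hf : StrictMono f) : RobustlyIndependent ρ (x ∘ f) := by
  intro i y hy
  refine hx (f i) y (Submodule.span_mono ?_ hy)
  rintro _ ⟨j, hj, rfl⟩
  exact ⟨f j, hf hj, rfl⟩

section Exchange

variable {ι : Type*} [Fintype ι] [DecidableEq ι]

lemma exists_notMem_le_abs_of_lt_norm_sub {X : Matrix ι ι ℝ} {R : Finset ι}
    (hX : ∀ r ∉ R, X r = Pi.single r 1) {c : ι → ℝ} {ρ : ℝ} (hρ : 0 ≤ ρ)
    (h : ρ < ‖WithLp.toLp 2 (Matrix.vecMul c X) - ∑ r ∈ R, c r • WithLp.toLp 2 (X r)‖) :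
    ∃ r ∉ R, ρ / √(Fintype.card ι) ≤ |c r| := by
  by_contra! hsmall
  have hdiff : WithLp.toLp 2 (Matrix.vecMul c X) - ∑ r ∈ R, c r • WithLp.toLp 2 (X r) =
      WithLp.toLp 2 fun i ↦ if i ∈ R then 0 else c i := by
    rw [Matrix.vecMul_eq_sum, WithLp.toLp_sum, ← Finset.sum_add_sum_compl R]
    simp only [WithLp.toLp_smul, add_sub_cancel_left]
    ext i
    rw [WithLp.ofLp_sum, Finset.sum_apply,
      Finset.sum_congr rfl fun r hr ↦ by rw [hX r (Finset.mem_compl.mp hr)]]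
    simp
  refine h.not_ge (le_of_sq_le_sq ?_ hρ)
  rw [hdiff, EuclideanSpace.norm_sq_eq]
  calc ∑ i, ‖if i ∈ R then 0 else c i‖ ^ 2
      ≤ ∑ _i : ι, (ρ / √(Fintype.card ι)) ^ 2 := by
        refine Finset.sum_le_sum fun i _ ↦ pow_le_pow_left₀ (norm_nonneg _) ?_ 2
        split_ifs with hi
        · rw [norm_zero]
          positivity
        · exact (hsmall i hi).le
    _ ≤ ρ ^ 2 := by
        rw [Finset.sum_const, Finset.card_univ, nsmul_eq_mul, div_pow,
          Real.sq_sqrt (Nat.cast_nonneg _), mul_div_assoc']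
        exact div_le_of_le_mul₀ (Nat.cast_nonneg _) (sq_nonneg _) (mul_comm _ _).le

-- Steinitz exchange: rows of the identity are replaced one by one, and by Cramer's rule each
-- replacement multiplies the determinant by a coefficient of the new row.
lemma RobustlyIndependent.exists_matrix [Nonempty ι] {ρ : ℝ} (hρ : 0 < ρ) {k : ℕ}
    {x : Fin k → EuclideanSpace ℝ ι} (hx : RobustlyIndependent ρ x) :
    ∃ (X : Matrix ι ι ℝ) (R : Finset ι), #R = k ∧ (∀ r ∈ R, ∃ i, X r = (x i).ofLp) ∧
      (∀ r ∉ R, X r = Pi.single r 1) ∧ (ρ / √(Fintype.card ι)) ^ k ≤ |X.det| := by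
  have hratio : 0 < ρ / √(Fintype.card ι) := by
    have : (0 : ℝ) < Fintype.card ι := by exact_mod_cast Fintype.card_pos
    positivity
  induction k with
  | zero => exact ⟨1, ∅, rfl, by simp, fun r _ ↦ by ext c; simp [Matrix.one_apply,
      Pi.single_apply, eq_comm], by simp⟩
  | succ k ih =>
    obtain ⟨X, R, hR, hold, hunit, hdet⟩ := ih (hx.comp_strictMono Fin.strictMono_castSucc)
    have hdet0 : IsUnit X.det :=
      isUnit_iff_ne_zero.mpr (abs_pos.mp ((pow_pos hratio k).trans_le hdet))
    set c : ι → ℝ := Matrix.vecMul (x (Fin.last k)).ofLp X⁻¹ with hc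
    have hcX : Matrix.vecMul c X = (x (Fin.last k)).ofLp := by
      rw [hc, Matrix.vecMul_vecMul, Matrix.nonsing_inv_mul _ hdet0, Matrix.vecMul_one]
    have hspan : ∑ r ∈ R, c r • WithLp.toLp 2 (X r) ∈
        Submodule.span ℝ (x '' Set.Iio (Fin.last k)) := by
      refine Submodule.sum_mem _ fun r hr ↦ Submodule.smul_mem _ _ (Submodule.subset_span ?_)
      obtain ⟨i, hi⟩ := hold r hr
      exact ⟨i.castSucc, Fin.castSucc_lt_last i, by rw [hi]; rfl⟩
    obtain ⟨r, hr, hcr⟩ := exists_notMem_le_abs_of_lt_norm_sub hunit (c := c) hρ.le (by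
      rw [hcX]
      exact hx (Fin.last k) _ hspan)
    refine ⟨X.updateRow r (Matrix.vecMul c X), insert r R, by
      rw [Finset.card_insert_of_notMem hr, hR], fun s hs ↦ ?_, fun s hs ↦ ?_, ?_⟩
    · rcases eq_or_ne s r with rfl | hsr
      · exact ⟨Fin.last k, by rw [Matrix.updateRow_self, hcX]⟩
      · obtain ⟨i, hi⟩ := hold s (Finset.mem_of_mem_insert_of_ne hs hsr)
        exact ⟨i.castSucc, by rw [Matrix.updateRow_ne hsr, hi]; rfl⟩
    · rw [Finset.mem_insert, not_or] at hs
      rw [Matrix.updateRow_ne hs.1, hunit s hs.2]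
    · rw [Matrix.vecMul_eq_sum, Matrix.det_updateRow_sum, smul_eq_mul, abs_mul, pow_succ']
      gcongr

end Exchange

section Volume

open MeasureTheory

variable {ι : Type*} [Fintype ι]

lemma card_le_volume_of_forall_unit_cube_subset {A : Type*} {C : Finset A} {z : A → ι → ℕ}
    (hz : Function.Injective z) {S : Set (ι → ℝ)}
    (hS : ∀ α ∈ C, (Set.univ.pi fun i ↦ Set.Ico (z α i : ℝ) (z α i + 1)) ⊆ S) :
    (#C : ENNReal) ≤ volume S := by
  have hdisj : (C : Set A).PairwiseDisjoint
      fun α ↦ Set.univ.pi fun i ↦ Set.Ico (z α i : ℝ) (z α i + 1) := by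
    intro α _ β _ hne
    refine Set.disjoint_left.mpr fun y hyα hyβ ↦ hne (hz (funext fun i ↦ ?_))
    have hα := hyα i (Set.mem_univ i)
    have hβ := hyβ i (Set.mem_univ i)
    rw [← (Nat.floor_eq_iff ((Nat.cast_nonneg _).trans hα.1)).mpr hα,
      (Nat.floor_eq_iff ((Nat.cast_nonneg _).trans hβ.1)).mpr hβ]
  calc (#C : ENNReal)
      = volume (⋃ α ∈ C, Set.univ.pi fun i ↦ Set.Ico (z α i : ℝ) (z α i + 1)) := by
        rw [measure_biUnion_finset hdisj fun α _ ↦ .univ_pi fun i ↦ measurableSet_Ico]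
        simp [Real.volume_pi_Ico]
    _ ≤ volume S := measure_mono (Set.iUnion₂_subset hS)

lemma volume_Icc_ite [DecidableEq ι] (R : Finset ι) {b L : ℝ} (hb : 0 ≤ b) (hL : 0 ≤ L) :
    volume (Set.Icc (fun r ↦ if r ∈ R then -b else 0) fun r : ι ↦ if r ∈ R then b else L) =
      ENNReal.ofReal ((2 * b) ^ #R * L ^ (Fintype.card ι - #R)) := by
  rw [Real.volume_Icc_pi, ← ENNReal.ofReal_prod_of_nonneg fun r _ ↦ by split_ifs <;> linarith]
  have hside (r : ι) : ((if r ∈ R then b else L) - if r ∈ R then -b else 0) =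
      if r ∈ R then 2 * b else L := by
    split_ifs <;> ring
  simp_rw [hside]
  rw [Finset.prod_ite, Finset.prod_const, Finset.prod_const, Finset.filter_not,
    Finset.filter_mem_eq_inter, Finset.univ_inter, ← Finset.compl_eq_univ_sdiff,
    Finset.card_compl]

end Volume

section SmallBall

variable {ι : Type*} [Fintype ι] {L : ℕ}

/-- The point of the grid `{0, …, L - 1}^ι` as a vector of `ℝ^ι`. -/
def gridVec (α : ι → Fin L) : EuclideanSpace ℝ ι :=
  WithLp.toLp 2 fun c ↦ (α c : ℝ)

lemma norm_le_mul_sqrt_card {u : EuclideanSpace ℝ ι} {a : ℝ} (ha : 0 ≤ a)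
    (hu : ∀ c, |u c| ≤ a) : ‖u‖ ≤ a * √(Fintype.card ι) := by
  refine le_of_sq_le_sq ?_ (by positivity)
  rw [EuclideanSpace.norm_sq_eq, mul_pow, Real.sq_sqrt (Nat.cast_nonneg _)]
  calc ∑ c, ‖u c‖ ^ 2 ≤ ∑ _c : ι, a ^ 2 :=
        Finset.sum_le_sum fun c _ ↦ pow_le_pow_left₀ (norm_nonneg _) (hu c) 2
    _ = a ^ 2 * Fintype.card ι := by simp [mul_comm]

lemma norm_gridVec_le (α : ι → Fin L) : ‖gridVec α‖ ≤ L * √(Fintype.card ι) := by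
  refine norm_le_mul_sqrt_card (Nat.cast_nonneg _) fun c ↦ ?_
  rw [gridVec, Nat.abs_cast]
  exact Nat.cast_le.mpr (α c).isLt.le

lemma abs_inner_le_of_mem_unit_cube {α : ι → Fin L} {y : ι → ℝ}
    (hy : y ∈ Set.univ.pi fun i ↦ Set.Ico (α i : ℝ) (α i + 1)) {x : EuclideanSpace ℝ ι}
    (hx : ‖x‖ ≤ 2) {B : ℝ} (hB : 2 * √(Fintype.card ι) ≤ B) (hα : |⟪gridVec α, x⟫| ≤ B) :
    |⟪WithLp.toLp 2 y, x⟫| ≤ 2 * B := by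
  have hdist : ‖WithLp.toLp 2 y - gridVec α‖ ≤ 1 * √(Fintype.card ι) := by
    refine norm_le_mul_sqrt_card zero_le_one fun c ↦ ?_
    have hc := hy c (Set.mem_univ c)
    simp only [gridVec, PiLp.sub_apply, abs_le]
    constructor <;> linarith [hc.1, hc.2]
  calc |⟪WithLp.toLp 2 y, x⟫| = |⟪WithLp.toLp 2 y - gridVec α, x⟫ + ⟪gridVec α, x⟫| := by
        rw [← inner_add_left, sub_add_cancel]
    _ ≤ ‖WithLp.toLp 2 y - gridVec α‖ * ‖x‖ + |⟪gridVec α, x⟫| :=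
        (abs_add_le _ _).trans (by gcongr; exact abs_real_inner_le_norm _ _)
    _ ≤ 1 * √(Fintype.card ι) * 2 + B := by gcongr
    _ ≤ 2 * B := by linarith

variable [DecidableEq ι]

lemma mulVec_mem_Icc_of_mem_unit_cube {κ : Type*} {x : κ → EuclideanSpace ℝ ι}
    {X : Matrix ι ι ℝ} {R : Finset ι} (hrow : ∀ r ∈ R, ∃ i, X r = (x i).ofLp)
    (hunit : ∀ r ∉ R, X r = Pi.single r 1) (hnorm : ∀ i, ‖x i‖ ≤ 2) {B : ℝ}
    (hB : 2 * √(Fintype.card ι) ≤ B) {α : ι → Fin L} (hα : ∀ i, |⟪gridVec α, x i⟫| ≤ B)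
    {y : ι → ℝ} (hy : y ∈ Set.univ.pi fun i ↦ Set.Ico (α i : ℝ) (α i + 1)) :
    X.mulVec y ∈ Set.Icc (fun r ↦ if r ∈ R then -(2 * B) else 0)
      fun r ↦ if r ∈ R then 2 * B else L := by
  suffices h : ∀ r, (if r ∈ R then -(2 * B) else 0) ≤ X.mulVec y r ∧
      X.mulVec y r ≤ if r ∈ R then 2 * B else L from ⟨fun r ↦ (h r).1, fun r ↦ (h r).2⟩
  intro r
  split_ifs with hr
  · obtain ⟨i, hi⟩ := hrow r hr
    have hinner : X.mulVec y r = ⟪WithLp.toLp 2 y, x i⟫ := by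
      rw [Matrix.mulVec, hi, PiLp.inner_apply]
      rfl
    rw [hinner, ← abs_le]
    exact abs_inner_le_of_mem_unit_cube hy (hnorm i) hB (hα i)
  · have hcoord : X.mulVec y r = y r := by
      rw [Matrix.mulVec, hunit r hr, single_one_dotProduct]
    have hyr := hy r (Set.mem_univ r)
    have hαr : ((α r : ℕ) : ℝ) + 1 ≤ L := by exact_mod_cast (α r).isLt
    rw [hcoord]
    exact ⟨(Nat.cast_nonneg _).trans hyr.1, hyr.2.le.trans hαr⟩

lemma card_forall_abs_inner_gridVec_le_le [Nonempty ι] {k : ℕ} (hL : 0 < L) {ρ B : ℝ} (hρ : 0 < ρ)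
    (hB : 2 * √(Fintype.card ι) ≤ B) {x : Fin k → EuclideanSpace ℝ ι}
    (hx : RobustlyIndependent ρ x) (hnorm : ∀ i, ‖x i‖ ≤ 2) :
    (#{α : ι → Fin L | ∀ i, |⟪gridVec α, x i⟫| ≤ B} : ℝ) ≤
      (4 * B * √(Fintype.card ι) / (ρ * L)) ^ k * L ^ Fintype.card ι := by
  have hD : (0 : ℝ) < √(Fintype.card ι) := Real.sqrt_pos.mpr (by exact_mod_cast Fintype.card_pos)
  have hB0 : 0 < B := by linarith
  have hL' : (0 : ℝ) < L := by exact_mod_cast hL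
  obtain ⟨X, R, hR, hrow, hunit, hdet⟩ := hx.exists_matrix hρ
  have hdet0 : 0 < |X.det| :=
    (by positivity : 0 < (ρ / √(Fintype.card ι)) ^ k).trans_le hdet
  have hvol := card_le_volume_of_forall_unit_cube_subset
    (C := {α : ι → Fin L | ∀ i, |⟪gridVec α, x i⟫| ≤ B}) (z := fun α i ↦ (α i : ℕ))
    (S := Matrix.toLin' X ⁻¹' Set.Icc (fun r ↦ if r ∈ R then -(2 * B) else 0)
      fun r ↦ if r ∈ R then 2 * B else L)
    (fun α β h ↦ funext fun i ↦ Fin.ext (congrFun h i)) fun α hα y hy ↦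
      mulVec_mem_Icc_of_mem_unit_cube hrow hunit hnorm hB (Finset.mem_filter.mp hα).2 hy
  rw [MeasureTheory.Measure.addHaar_preimage_linearMap _ (by
      rw [LinearMap.det_toLin']
      exact abs_pos.mp hdet0), LinearMap.det_toLin', volume_Icc_ite R (by positivity) hL'.le,
    ← ENNReal.ofReal_mul (abs_nonneg _), ← ENNReal.ofReal_natCast,
    ENNReal.ofReal_le_ofReal_iff (by positivity), hR, abs_inv] at hvol
  have hpow : (L : ℝ) ^ Fintype.card ι = L ^ k * L ^ (Fintype.card ι - k) := by
    rw [← pow_add, Nat.add_sub_cancel' (hR ▸ R.card_le_univ)]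
  calc (#{α : ι → Fin L | ∀ i, |⟪gridVec α, x i⟫| ≤ B} : ℝ)
      ≤ |X.det|⁻¹ * ((2 * (2 * B)) ^ k * L ^ (Fintype.card ι - k)) := hvol
    _ ≤ ((ρ / √(Fintype.card ι)) ^ k)⁻¹ * ((2 * (2 * B)) ^ k * L ^ (Fintype.card ι - k)) := by
        gcongr
    _ = (4 * B * √(Fintype.card ι) / (ρ * L)) ^ k * L ^ Fintype.card ι := by
        rw [hpow, ← inv_pow, inv_div, ← mul_assoc 2 2 B]
        norm_num only
        simp only [div_pow, mul_pow]
        field_simp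

end SmallBall

/-! ### The hard instance -/

/-- Parameters of the hard instance: the slope `η` of the probe pieces, the distance `r` from the
current block required of exploratory queries, the margin `κ` of near-orthogonality of the probes,
and the block length `k`. -/
structure HardParams where
  η : ℝ
  r : ℝ
  κ : ℝ
  k : ℕ
  η_pos : 0 < η
  η_le : η ≤ 1 / 4
  r_pos : 0 < r
  r_le : r ≤ 1
  κ_nonneg : 0 ≤ κ
  κ_le : κ ≤ 1 / 2
  k_pos : 0 < k

/-- The pieces whose maximum is the hard function: `inl none` is `‖x‖ - 1`, `inl (some (i, b))` is
`± ⟪a i, x⟫ - η`, and `inr j` is the `j`-th probe `η (⟪v j, x⟫ - offset j)`. -/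
abbrev Piece (n : ℕ) := Option (Fin n × Bool) ⊕ ℕ

namespace Piece

variable {n : ℕ}

/-- The pieces present once `N` probes are revealed. -/
def available (n N : ℕ) : Set (Piece n) :=
  {c | ∀ j, c = .inr j → j < N}

lemma inl_mem_available (N : ℕ) (c : Option (Fin n × Bool)) :
    (.inl c : Piece n) ∈ available n N := by
  rintro j ⟨⟩

lemma inr_mem_available {N j : ℕ} : (.inr j : Piece n) ∈ available n N ↔ j < N := by
  simp [available]

lemma available_mono {N N' : ℕ} (h : N ≤ N') : available n N ⊆ available n N' :=
  fun _ hc j hj ↦ (hc j hj).trans_le h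

lemma eq_inr_or_mem_available {N : ℕ} {c : Piece n} (hc : c ∈ available n (N + 1)) :
    c = .inr N ∨ c ∈ available n N := by
  by_cases h : c = .inr N
  · exact Or.inl h
  · exact Or.inr fun j hj ↦
      (Nat.le_of_lt_succ (hc j hj)).lt_of_ne fun hjN ↦ h (hjN ▸ hj)

end Piece

namespace HardParams

open Piece

section Offset

variable (p : HardParams)

/-- The offset of the `j`-th probe. It grows by `10 r` with every probe and by a further
`2 κ + 5 r` with every block of `k` probes, so that probes lie below earlier ones at the queries
where those were revealed. -/
noncomputable def offset (j : ℕ) : ℝ :=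
  10 * p.r * j + (2 * p.κ + 5 * p.r) * (j ⌈/⌉ p.k : ℕ)

lemma margin_nonneg : 0 ≤ 2 * p.κ + 5 * p.r := by
  linarith [p.κ_nonneg, p.r_pos]

lemma offset_nonneg (j : ℕ) : 0 ≤ p.offset j :=
  add_nonneg (mul_nonneg (by linarith [p.r_pos]) j.cast_nonneg)
    (mul_nonneg p.margin_nonneg (Nat.cast_nonneg _))

lemma offset_add_le_of_ceilDiv_eq {i j : ℕ} (hij : i < j) (h : i ⌈/⌉ p.k = j ⌈/⌉ p.k) :
    p.offset i + 10 * p.r ≤ p.offset j := by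
  have hij' : (i : ℝ) + 1 ≤ j := by exact_mod_cast hij
  rw [offset, offset, h]
  nlinarith [p.r_pos]

lemma offset_add_le_of_ceilDiv_lt {i j : ℕ} (hij : i ≤ j) (h : i ⌈/⌉ p.k < j ⌈/⌉ p.k) :
    p.offset i + (2 * p.κ + 5 * p.r) ≤ p.offset j := by
  have hij' : (i : ℝ) ≤ j := by exact_mod_cast hij
  have h' : ((i ⌈/⌉ p.k : ℕ) : ℝ) + 1 ≤ (j ⌈/⌉ p.k : ℕ) := by exact_mod_cast h
  rw [offset, offset]
  nlinarith [p.r_pos, p.margin_nonneg]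

lemma offset_le {i P : ℕ} (h : i ≤ p.k * P) :
    p.offset i ≤ 10 * p.r * (p.k * P) + (2 * p.κ + 5 * p.r) * P := by
  have hceil : i ⌈/⌉ p.k ≤ P := (ceilDiv_le_iff_le_smul p.k_pos).mpr h
  have h' : (i : ℝ) ≤ p.k * P := by exact_mod_cast h
  have := p.margin_nonneg
  have := p.r_pos
  rw [offset]
  gcongr

end Offset

variable {E : Type} [NormedAddCommGroup E] [InnerProductSpace ℝ E] {n : ℕ}

section Pieces

variable (p : HardParams) (a : Fin n → E) (v : ℕ → E)

/-- The value of a piece. -/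
noncomputable def value : Piece n → E → ℝ
  | .inl none, x => ‖x‖ - 1
  | .inl (some (i, b)), x => boolSign b * ⟪a i, x⟫ - p.η
  | .inr j, x => p.η * (⟪v j, x⟫ - p.offset j)

/-- A subgradient of a piece. -/
noncomputable def gradient : Piece n → E → E
  | .inl none, x => ‖x‖⁻¹ • x
  | .inl (some (i, b)), _ => boolSign b • a i
  | .inr j, _ => p.η • v j

lemma value_add_inner_gradient_le (c : Piece n) (x y : E) :
    p.value a v c x + ⟪p.gradient a v c x, y - x⟫ ≤ p.value a v c y := by
  match c with
  | .inl none =>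
    rw [gradient, value, value, real_inner_smul_left, inner_sub_right, real_inner_self_eq_norm_sq]
    rcases eq_or_ne ‖x‖ 0 with h | h
    · simp [h]
    · have hxy : ‖x‖⁻¹ * ⟪x, y⟫ ≤ ‖y‖ := by
        rw [inv_mul_le_iff₀ ((norm_nonneg x).lt_of_ne' h)]
        exact real_inner_le_norm x y
      have hxx : ‖x‖⁻¹ * ‖x‖ ^ 2 = ‖x‖ := by field_simp
      rw [mul_sub, hxx]
      linarith
  | .inl (some (i, b)) =>
    rw [gradient, value, value, real_inner_smul_left, inner_sub_right]
    linarith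
  | .inr j =>
    rw [gradient, value, value, real_inner_smul_left, inner_sub_right]
    linarith

variable {a v} in
lemma norm_gradient_le (ha : ∀ i, ‖a i‖ ≤ 1) (hv : ∀ j, ‖v j‖ ≤ 2) (c : Piece n) (x : E) :
    ‖p.gradient a v c x‖ ≤ 1 := by
  match c with
  | .inl none =>
    rw [gradient, norm_smul, norm_inv, norm_norm]
    exact inv_mul_le_one
  | .inl (some (i, b)) =>
    rw [gradient, norm_smul]
    cases b <;> simpa [boolSign] using ha i
  | .inr j =>
    rw [gradient, norm_smul, Real.norm_of_nonneg p.η_pos.le]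
    nlinarith [hv j, norm_nonneg (v j), p.η_le]

variable {v} in
lemma value_congr {v' : ℕ → E} {N : ℕ} (h : ∀ i < N, v i = v' i) {c : Piece n}
    (hc : c ∈ available n N) : p.value a v c = p.value a v' c := by
  match c with
  | .inl none | .inl (some _) => rfl
  | .inr j =>
    funext x
    rw [value, value, h j (hc j rfl)]

variable {v} in
lemma gradient_congr {v' : ℕ → E} {N : ℕ} (h : ∀ i < N, v i = v' i) {c : Piece n}
    (hc : c ∈ available n N) : p.gradient a v c = p.gradient a v' c := by
  match c with
  | .inl none | .inl (some _) => rfl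
  | .inr j =>
    funext x
    rw [gradient, gradient, h j (hc j rfl)]

end Pieces

section Pick

variable (p : HardParams) (a : Fin n → E) (v : ℕ → E)

open scoped Classical in
/-- A piece maximal at `x` among those available with `N` probes. Ties are resolved in favour of
the earlier piece, so that revealing a probe that is nowhere dominant does not change the pick. -/
noncomputable def pick : ℕ → E → Piece n
  | 0, x => .inl (Finite.exists_max fun c ↦ p.value a 0 (.inl c) x).choose
  | N + 1, x => if p.value a v (pick N x) x < p.value a v (.inr N) x then .inr N else pick N x

/-- The first-order oracle of the hard function with `N` probes. -/
noncomputable def oracle (N : ℕ) (x : E) : ℝ × E :=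
  (p.value a v (p.pick a v N x) x, p.gradient a v (p.pick a v N x) x)

lemma pick_mem_available (N : ℕ) (x : E) : p.pick a v N x ∈ available n N := by
  induction N with
  | zero => exact inl_mem_available 0 _
  | succ N ih =>
    rw [pick]
    split_ifs
    · exact inr_mem_available.mpr N.lt_succ_self
    · exact available_mono N.le_succ ih

variable {a v}

lemma value_le_value_pick {N : ℕ} {c : Piece n} (hc : c ∈ available n N) (x : E) :
    p.value a v c x ≤ p.value a v (p.pick a v N x) x := by
  induction N with
  | zero =>
    have hbase : ∀ c ∈ available n 0, p.value a v c = p.value a 0 c := fun c hc ↦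
      p.value_congr a (fun i hi ↦ absurd hi i.not_lt_zero) hc
    rw [hbase c hc, hbase _ (p.pick_mem_available a v 0 x)]
    match c with
    | .inl c => exact (Finite.exists_max fun c ↦ p.value a 0 (.inl c) x).choose_spec c
    | .inr j => exact absurd (hc j rfl) j.not_lt_zero
  | succ N ih =>
    rw [pick]
    rcases eq_inr_or_mem_available hc with rfl | hc
    · split_ifs with h
      · exact le_rfl
      · exact not_lt.mp h
    · split_ifs with h
      · exact (ih hc).trans h.le
      · exact ih hc

lemma oracle_add_inner_le (N : ℕ) (x y : E) :
    (p.oracle a v N x).1 + ⟪(p.oracle a v N x).2, y - x⟫ ≤ (p.oracle a v N y).1 :=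
  (p.value_add_inner_gradient_le a v _ x y).trans
    (p.value_le_value_pick (p.pick_mem_available a v N x) y)

lemma pick_congr {v' : ℕ → E} {N : ℕ} (h : ∀ i < N, v i = v' i) :
    p.pick a v N = p.pick a v' N := by
  induction N with
  | zero => rfl
  | succ N ih =>
    funext x
    rw [pick, pick, ih fun i hi ↦ h i (hi.trans N.lt_succ_self),
      p.value_congr a h (available_mono N.le_succ (p.pick_mem_available a v' N x)),
      p.value_congr a h (inr_mem_available.mpr N.lt_succ_self)]

lemma oracle_congr {v' : ℕ → E} {N : ℕ} (h : ∀ i < N, v i = v' i) :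
    p.oracle a v N = p.oracle a v' N := by
  funext x
  rw [oracle, oracle, p.pick_congr h, p.value_congr a h (p.pick_mem_available a v' N x),
    p.gradient_congr a h (p.pick_mem_available a v' N x)]

lemma oracle_succ {N : ℕ} {x : E} (h : p.value a v (.inr N) x ≤ (p.oracle a v N x).1) :
    p.oracle a v (N + 1) x = p.oracle a v N x := by
  have hpick : p.pick a v (N + 1) x = p.pick a v N x := by
    rw [pick]
    exact if_neg h.not_gt
  rw [oracle, hpick, oracle]

lemma norm_sub_one_le_oracle (N : ℕ) (x : E) : ‖x‖ - 1 ≤ (p.oracle a v N x).1 :=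
  p.value_le_value_pick (inl_mem_available N none) x

lemma abs_inner_sub_le_oracle (N : ℕ) (i : Fin n) (x : E) :
    |⟪a i, x⟫| - p.η ≤ (p.oracle a v N x).1 := by
  have hsign (b : Bool) : boolSign b * ⟪a i, x⟫ - p.η ≤ (p.oracle a v N x).1 :=
    p.value_le_value_pick (inl_mem_available N (some (i, b))) x
  rcases abs_cases ⟪a i, x⟫ with ⟨h, -⟩ | ⟨h, -⟩
  · simpa [h, boolSign] using hsign true
  · simpa [h, boolSign] using hsign false

lemma probe_le_oracle {N j : ℕ} (hj : j < N) (x : E) :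
    p.η * (⟪v j, x⟫ - p.offset j) ≤ (p.oracle a v N x).1 :=
  p.value_le_value_pick (inr_mem_available.mpr hj) x

lemma oracle_le {N : ℕ} {x : E} {B : ℝ} (hnorm : ‖x‖ - 1 ≤ B) (hrow : ∀ i, |⟪a i, x⟫| - p.η ≤ B)
    (hprobe : ∀ j < N, p.η * (⟪v j, x⟫ - p.offset j) ≤ B) : (p.oracle a v N x).1 ≤ B := by
  have hpick := p.pick_mem_available a v N x
  rw [oracle]
  match p.pick a v N x, hpick with
  | .inl none, _ => exact hnorm
  | .inl (some (i, b)), _ =>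
    have hsign : boolSign b * ⟪a i, x⟫ ≤ |⟪a i, x⟫| := by
      cases b
      · simpa [boolSign] using neg_le_abs ⟪a i, x⟫
      · simpa [boolSign] using le_abs_self ⟪a i, x⟫
    exact (sub_le_sub_right hsign _).trans (hrow i)
  | .inr j, hj => exact hprobe j (hj j rfl)

end Pick

end HardParams

/-! ### Exploratory queries -/

/-- The list index at which the block of length `k` containing the `j`-th entry begins. Entries are
counted from `1`, so `blockStart k (i + 1)` is the start of the block containing index `i`. -/
def blockStart (k j : ℕ) : ℕ := (j ⌈/⌉ k - 1) * k

lemma blockStart_mono {k : ℕ} (hk : 0 < k) : Monotone (blockStart k) := fun _ _ h ↦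
  Nat.mul_le_mul_right k (Nat.sub_le_sub_right ((gc_smul_ceilDiv hk).monotone_l h) 1)

lemma blockStart_succ {k : ℕ} (hk : 0 < k) (i : ℕ) : blockStart k (i + 1) = i / k * k := by
  rw [blockStart, Nat.ceilDiv_eq_add_pred_div, show i + 1 + k - 1 = i + k by omega,
    Nat.add_div_right i hk, Nat.succ_sub_one]

lemma blockStart_lt {k j : ℕ} (hk : 0 < k) (hj : 0 < j) : blockStart k j < j := by
  obtain ⟨i, rfl⟩ := Nat.exists_eq_succ_of_ne_zero hj.ne'
  rw [blockStart_succ hk]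
  exact Nat.lt_succ_of_le (Nat.div_mul_le_self i k)

lemma le_blockStart_add {k j : ℕ} (hk : 0 < k) : j ≤ blockStart k j + k := by
  cases j with
  | zero => exact Nat.zero_le _
  | succ i =>
    rw [blockStart_succ hk]
    exact Nat.lt_div_mul_add hk

section BlockSpan

variable {E : Type*} [AddCommGroup E] [Module ℝ E]

/-- The span of those of the first `j` entries of `l` that lie in the block of the `j`-th entry. -/
def blockSpan (k j : ℕ) (l : List E) : Submodule ℝ E :=
  Submodule.span ℝ {z | z ∈ (l.take j).drop (blockStart k j)}

lemma blockSpan_congr {l l' : List E} {j : ℕ} (k : ℕ) (h : l.take j = l'.take j) :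
    blockSpan k j l = blockSpan k j l' := by
  rw [blockSpan, blockSpan, h]

lemma blockSpan_le_of_ceilDiv_eq {k i j : ℕ} (hij : i ≤ j) (h : i ⌈/⌉ k = j ⌈/⌉ k) (l : List E) :
    blockSpan k i l ≤ blockSpan k j l := by
  rw [blockSpan, blockSpan, blockStart, h, ← blockStart]
  exact Submodule.span_mono fun z hz ↦
    ((List.take_prefix_take_left hij).drop (blockStart k j)).subset hz

lemma finrank_blockSpan_le {k : ℕ} (hk : 0 < k) (j : ℕ) (l : List E) :
    Module.finrank ℝ (blockSpan k j l) ≤ k := by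
  classical
  have hspan : blockSpan k j l = Submodule.span ℝ
      (((l.take j).drop (blockStart k j)).toFinset : Set E) := by
    rw [blockSpan]
    congr 1
    ext
    simp
  rw [hspan]
  refine (finrank_span_finset_le_card _).trans ((List.toFinset_card_le _).trans ?_)
  have := List.length_take_le j l
  have := le_blockStart_add hk (j := j)
  rw [List.length_drop]
  omega

end BlockSpan

namespace HardParams

variable {E : Type} [NormedAddCommGroup E] [InnerProductSpace ℝ E] {n M : ℕ}

section Explored

variable (p : HardParams) (a : Fin n → E)

/-- A query is exploratory with respect to the list `l` of earlier exploratory queries if it is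
nearly orthogonal to the rows and far from the span of the block of `l` that it would extend. -/
structure IsExploratory (l : List E) (x : E) : Prop where
  norm_lt : ‖x‖ < 2
  abs_inner_lt : ∀ i, |⟪a i, x⟫| < 2 * p.η
  lt_norm_sub : ∀ y ∈ blockSpan p.k (l.length + 1) l, p.r < ‖x - y‖

open scoped Classical in
/-- The exploratory queries among the first `t` terms of a sequence of queries. -/
noncomputable def explored (x : ℕ → E) : ℕ → List E
  | 0 => []
  | t + 1 => if p.IsExploratory a (explored x t) (x t) then explored x t ++ [x t] else explored x t

variable {p a}

lemma explored_prefix (x : ℕ → E) {s t : ℕ} (h : s ≤ t) :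
    p.explored a x s <+: p.explored a x t := by
  induction t, h using Nat.le_induction with
  | base => exact List.prefix_rfl
  | succ t _ ih =>
    refine ih.trans ?_
    rw [explored]
    split_ifs
    · exact List.prefix_append _ _
    · exact List.prefix_rfl

lemma length_explored_mono (x : ℕ → E) : Monotone fun t ↦ (p.explored a x t).length :=
  fun _ _ h ↦ (explored_prefix x h).length_le

lemma length_explored_le (x : ℕ → E) (t : ℕ) : (p.explored a x t).length ≤ t := by
  induction t with
  | zero => rfl
  | succ t ih =>
    rw [explored]
    split_ifs
    · simpa using ih
    · exact ih.trans t.le_succ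

lemma take_length_explored (x : ℕ → E) {s t : ℕ} (h : s ≤ t) :
    (p.explored a x t).take (p.explored a x s).length = p.explored a x s :=
  (List.prefix_iff_eq_take.mp (explored_prefix x h)).symm

lemma two_le_norm_or_row_or_near_blockSpan (x : ℕ → E) (s : ℕ) :
    2 ≤ ‖x s‖ ∨ (∃ i, 2 * p.η ≤ |⟪a i, x s⟫|) ∨
      ∃ y ∈ blockSpan p.k (p.explored a x (s + 1)).length (p.explored a x (s + 1)),
        ‖x s - y‖ ≤ p.r := by
  by_contra! hcon
  obtain ⟨hnorm, hrow, hfar⟩ := hcon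
  by_cases hE : p.IsExploratory a (p.explored a x s) (x s)
  · refine (hfar (x s) (Submodule.subset_span ?_)).not_ge (by simpa using p.r_pos.le)
    rw [explored, if_pos hE, Set.mem_ofPred_eq, List.take_length, List.drop_append_of_le_length]
    · simp
    · have := blockStart_lt p.k_pos (j := (p.explored a x s).length + 1) (Nat.succ_pos _)
      simpa using Nat.le_of_lt_succ this
  · refine hE ⟨hnorm, hrow, fun y hy ↦ hfar y (Submodule.span_mono (fun z hz ↦ ?_) hy)⟩
    rw [explored, if_neg hE]
    rw [Set.mem_ofPred_eq, List.take_of_length_le (Nat.le_succ _)] at hz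
    rw [Set.mem_ofPred_eq, List.take_length]
    exact List.drop_subset_drop_left _ (blockStart_mono p.k_pos (Nat.le_succ _)) hz

end Explored

end HardParams

section Revealed

variable {E : Type*} [NormedAddCommGroup E] [InnerProductSpace ℝ E] {n : ℕ}

/-- The span of the rows and of the first `j` probes. -/
def revealedSpan (a : Fin n → E) (v : ℕ → E) (j : ℕ) : Submodule ℝ E :=
  Submodule.span ℝ (Set.range a ∪ v '' Set.Iio j)

instance (a : Fin n → E) (v : ℕ → E) (j : ℕ) : FiniteDimensional ℝ (revealedSpan a v j) :=
  FiniteDimensional.span_of_finite ℝ ((Set.finite_range a).union ((Set.finite_Iio j).image v))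

/-- The component of the `j`-th probe orthogonal to the rows and the earlier probes. -/
noncomputable def freshPart (a : Fin n → E) (v : ℕ → E) (j : ℕ) : E :=
  v j - (revealedSpan a v j).starProjection (v j)

/-- The sum of the fresh parts of the first `N` probes: its negative is a direction in which all
these probes decrease while the rows stay constant. -/
noncomputable def freshSum (a : Fin n → E) (v : ℕ → E) (N : ℕ) : E :=
  ∑ j ∈ Finset.range N, freshPart a v j

variable {a : Fin n → E} {v : ℕ → E}

lemma revealedSpan_congr {v' : ℕ → E} {j : ℕ} (h : ∀ i < j, v i = v' i) :
    revealedSpan a v j = revealedSpan a v' j := by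
  rw [revealedSpan, revealedSpan, Set.image_congr fun i (hi : i ∈ Set.Iio j) ↦ h i hi]

lemma freshPart_congr {v' : ℕ → E} {j : ℕ} (h : ∀ i ≤ j, v i = v' i) :
    freshPart a v j = freshPart a v' j := by
  simp only [freshPart, revealedSpan_congr fun i hi ↦ h i (le_of_lt hi), h j le_rfl]

lemma freshSum_congr {v' : ℕ → E} {N : ℕ} (h : ∀ i < N, v i = v' i) :
    freshSum a v N = freshSum a v' N :=
  Finset.sum_congr rfl fun _ hj ↦
    freshPart_congr fun i hi ↦ h i (hi.trans_lt (Finset.mem_range.mp hj))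

lemma finrank_revealedSpan_le (a : Fin n → E) (v : ℕ → E) (j : ℕ) :
    Module.finrank ℝ (revealedSpan a v j) ≤ n + j := by
  classical
  have hspan : revealedSpan a v j = Submodule.span ℝ
      ((Finset.univ.image a ∪ (Finset.range j).image v : Finset E) : Set E) := by
    rw [revealedSpan]
    congr 1
    ext
    simp
  rw [hspan]
  refine (finrank_span_finset_le_card _).trans ((Finset.card_union_le _ _).trans ?_)
  have hrows := Finset.card_image_le (s := Finset.univ) (f := a)
  have hprobes := Finset.card_image_le (s := Finset.range j) (f := v)
  rw [Finset.card_univ, Fintype.card_fin] at hrows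
  rw [Finset.card_range] at hprobes
  exact Nat.add_le_add hrows hprobes

lemma revealedSpan_mono : Monotone (revealedSpan a v) := fun _ _ h ↦
  Submodule.span_mono (Set.union_subset_union_right _ (Set.image_mono (Set.Iio_subset_Iio h)))

lemma row_mem_revealedSpan (i : Fin n) (j : ℕ) : a i ∈ revealedSpan a v j :=
  Submodule.subset_span (Or.inl ⟨i, rfl⟩)

lemma probe_mem_revealedSpan {i j : ℕ} (h : i < j) : v i ∈ revealedSpan a v j :=
  Submodule.subset_span (Or.inr ⟨i, h, rfl⟩)

lemma freshPart_mem_revealedSpan {i j : ℕ} (h : i < j) : freshPart a v i ∈ revealedSpan a v j :=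
  Submodule.sub_mem _ (probe_mem_revealedSpan h)
    (revealedSpan_mono h.le (Submodule.starProjection_apply_mem _ _))

lemma freshSum_mem_revealedSpan (N : ℕ) : freshSum a v N ∈ revealedSpan a v N :=
  Submodule.sum_mem _ fun _ hj ↦ freshPart_mem_revealedSpan (Finset.mem_range.mp hj)

lemma inner_freshPart_eq_zero {y : E} {j : ℕ} (hy : y ∈ revealedSpan a v j) :
    ⟪y, freshPart a v j⟫ = 0 :=
  Submodule.inner_right_of_mem_orthogonal hy (Submodule.sub_starProjection_mem_orthogonal _)

lemma inner_freshPart_self (j : ℕ) : ⟪v j, freshPart a v j⟫ = ‖freshPart a v j‖ ^ 2 := by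
  have hproj := inner_freshPart_eq_zero
    (Submodule.starProjection_apply_mem (revealedSpan a v j) (v j))
  rw [← real_inner_self_eq_norm_sq, ← sub_eq_zero, ← inner_sub_left, freshPart, sub_sub_cancel]
  exact hproj

lemma norm_freshPart_le (j : ℕ) : ‖freshPart a v j‖ ≤ ‖v j‖ := by
  refine le_of_sq_le_sq ?_ (norm_nonneg _)
  rw [norm_sq_eq_norm_sq_starProjection_add (revealedSpan a v j) (v j), freshPart]
  exact le_add_of_nonneg_left (sq_nonneg _)

lemma norm_freshSum_le {C : ℝ} (hC : 0 ≤ C) (hv : ∀ j, ‖v j‖ ≤ C) (N : ℕ) :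
    ‖freshSum a v N‖ ≤ C * √N := by
  refine le_of_sq_le_sq ?_ (by positivity)
  rw [mul_pow, Real.sq_sqrt N.cast_nonneg]
  induction N with
  | zero => simp [freshSum]
  | succ N ih =>
    have hfresh : ‖freshPart a v N‖ ^ 2 ≤ C ^ 2 :=
      pow_le_pow_left₀ (norm_nonneg _) ((norm_freshPart_le N).trans (hv N)) 2
    rw [freshSum, Finset.sum_range_succ, ← freshSum, norm_add_sq_real,
      inner_freshPart_eq_zero (freshSum_mem_revealedSpan N)]
    push_cast
    linarith

lemma inner_row_freshSum (i : Fin n) (N : ℕ) : ⟪a i, freshSum a v N⟫ = 0 := by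
  rw [freshSum, inner_sum]
  exact Finset.sum_eq_zero fun j _ ↦ inner_freshPart_eq_zero (row_mem_revealedSpan i j)

lemma inner_probe_freshSum {j N : ℕ} (h : j < N) :
    ⟪v j, freshSum a v N⟫ = ⟪v j, freshSum a v j⟫ + ‖freshPart a v j‖ ^ 2 := by
  induction N, h using Nat.le_induction with
  | base =>
    rw [freshSum, Finset.sum_range_succ, ← freshSum, inner_add_right, inner_freshPart_self]
  | succ N hN ih =>
    rw [freshSum, Finset.sum_range_succ, ← freshSum, inner_add_right, ih,
      inner_freshPart_eq_zero (probe_mem_revealedSpan hN), add_zero]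

end Revealed

section Near

variable {E : Type*} [NormedAddCommGroup E] [InnerProductSpace ℝ E]

lemma IsGeneric.abs_inner_le_of_norm_sub_le {W : Set E} {S U : Submodule ℝ E}
    [U.HasOrthogonalProjection] {κ r : ℝ} {w x y : E} (h : IsGeneric W S U κ r w)
    (hr : 0 ≤ r) (hr1 : r ≤ 1) (hw : ‖w‖ ≤ 2) (hx : ‖x‖ ≤ 2) (hy : y ∈ S)
    (hxy : ‖x - y‖ ≤ r) : |⟪w, x⟫| ≤ 5 * r := by
  have hynorm : ‖y‖ ≤ 3 := by
    calc ‖y‖ = ‖x - (x - y)‖ := by rw [sub_sub_cancel]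
      _ ≤ ‖x‖ + ‖x - y‖ := norm_sub_le _ _
      _ ≤ 3 := by linarith
  calc |⟪w, x⟫| = |⟪w, y⟫ + ⟪w, x - y⟫| := by rw [← inner_add_right, add_sub_cancel]
    _ ≤ r * ‖y‖ + ‖w‖ * ‖x - y‖ :=
        (abs_add_le _ _).trans
          (add_le_add (h.abs_inner_le_of_mem y hy) (abs_real_inner_le_norm _ _))
    _ ≤ r * 3 + 2 * r := by gcongr
    _ = 5 * r := by ring

end Near

namespace HardParams

variable {E : Type} [NormedAddCommGroup E] [InnerProductSpace ℝ E] {n M : ℕ}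

section Transcript

variable (p : HardParams) (a : Fin n → E) (v : ℕ → E) (alg : MemAlg M E (ℝ × E))

/-- The query made at time `t` by the algorithm run against the oracle with `j` probes. -/
noncomputable def query (j t : ℕ) : E := alg.query (alg.mem (p.oracle a v j) t)

/-- The exploratory queries among the first `t` queries against the oracle with `j` probes. -/
noncomputable def exploredList (j t : ℕ) : List E := p.explored a (p.query a v alg j) t

/-- The vector `w` is generic as a `j`-th probe for runs of length `T`: it does not interfere with
the queries made before it is revealed, and has a large fresh part. This depends on the probes
before the `j`-th only. -/
def IsGenericProbe (T j : ℕ) (w : E) : Prop :=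
  IsGeneric (insert (freshSum a v j) (p.query a v alg j '' Set.Iio T))
    (blockSpan p.k j (p.exploredList a v alg j T)) (revealedSpan a v j) p.κ p.r w

variable {p a v alg}

lemma isGenericProbe_congr {v' : ℕ → E} {T j : ℕ} (h : ∀ i < j, v i = v' i) :
    p.IsGenericProbe a v alg T j = p.IsGenericProbe a v' alg T j := by
  have hquery : p.query a v alg j = p.query a v' alg j := by
    funext t
    rw [query, query, p.oracle_congr h]
  funext w
  simp only [IsGenericProbe, exploredList, freshSum_congr h, hquery, revealedSpan_congr h]

lemma IsGenericProbe.inner_query_le {T j s : ℕ} {w : E} (h : p.IsGenericProbe a v alg T j w)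
    (hs : s < T) : ⟪w, p.query a v alg j s⟫ ≤ p.κ * ‖p.query a v alg j s‖ :=
  (le_abs_self _).trans (h.abs_inner_le _ (Set.mem_insert_of_mem _ ⟨s, hs, rfl⟩))

lemma two_le_norm_query_or_row_or_near {T i j s : ℕ} (hs : s < T)
    (hi : (p.exploredList a v alg j (s + 1)).length = i)
    (hchain : (p.exploredList a v alg j T).take i = (p.exploredList a v alg i T).take i) :
    2 ≤ ‖p.query a v alg j s‖ ∨ (∃ c, 2 * p.η ≤ |⟪a c, p.query a v alg j s⟫|) ∨
      ∃ y ∈ blockSpan p.k i (p.exploredList a v alg i T), ‖p.query a v alg j s - y‖ ≤ p.r := by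
  have hspan : blockSpan p.k i (p.exploredList a v alg j (s + 1)) =
      blockSpan p.k i (p.exploredList a v alg i T) := by
    refine blockSpan_congr _ ?_
    rw [← hchain, ← hi, List.take_length]
    exact (take_length_explored _ hs).symm
  rw [← hspan, ← hi]
  exact two_le_norm_or_row_or_near_blockSpan (a := a) (p.query a v alg j) s

end Transcript

section Consistency

variable {p : HardParams} {a : Fin n → E} {v : ℕ → E} {alg : MemAlg M E (ℝ × E)}

lemma inner_query_add_offset_le {T i j s : ℕ} (hv : ∀ j, ‖v j‖ ≤ 2) (hij : i < j) (hs : s < T)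
    (hchain : (p.exploredList a v alg j T).take i = (p.exploredList a v alg i T).take i)
    (hgen : p.IsGenericProbe a v alg T j (v j)) (hnorm : ‖p.query a v alg j s‖ ≤ 2) {y : E}
    (hy : y ∈ blockSpan p.k i (p.exploredList a v alg i T))
    (hnear : ‖p.query a v alg j s - y‖ ≤ p.r) :
    ⟪v j, p.query a v alg j s⟫ + 5 * p.r + p.offset i ≤ p.offset j := by
  rcases ((gc_smul_ceilDiv p.k_pos).monotone_l hij.le).eq_or_lt with hblock | hblock
  · rw [← blockSpan_congr _ hchain] at hy
    have := (abs_le.mp (hgen.abs_inner_le_of_norm_sub_le p.r_pos.le p.r_le (hv j) hnorm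
      (blockSpan_le_of_ceilDiv_eq hij.le hblock _ hy) hnear)).2
    linarith [p.offset_add_le_of_ceilDiv_eq hij hblock]
  · have := hgen.inner_query_le hs
    nlinarith [p.offset_add_le_of_ceilDiv_lt hij.le hblock, p.κ_nonneg]

lemma value_probe_le_oracle {T j s : ℕ} (hv : ∀ j, ‖v j‖ ≤ 2)
    (hchain : ∀ i ≤ j, (p.exploredList a v alg j T).take i = (p.exploredList a v alg i T).take i)
    (hgen : ∀ i ≤ j, p.IsGenericProbe a v alg T i (v i)) (hs : s < T)
    (hlen : (p.exploredList a v alg j (s + 1)).length < j) :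
    p.value a v (.inr j) (p.query a v alg j s) ≤
      (p.oracle a v j (p.query a v alg j s)).1 := by
  have hη := p.η_pos
  have hgenj := (hgen j le_rfl).inner_query_le hs
  have hoff := p.offset_nonneg j
  rcases le_or_gt 2 ‖p.query a v alg j s‖ with hbig | hsmall
  · refine le_trans ?_ (p.norm_sub_one_le_oracle j _)
    have hinner : ⟪v j, p.query a v alg j s⟫ ≤ ‖p.query a v alg j s‖ / 2 := by
      nlinarith [p.κ_le, norm_nonneg (p.query a v alg j s)]
    rw [value]
    nlinarith [p.η_le]
  have hhalf : ⟪v j, p.query a v alg j s⟫ ≤ 1 := by nlinarith [p.κ_le, p.κ_nonneg]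
  rcases two_le_norm_query_or_row_or_near hs rfl (hchain _ hlen.le) with hbig | ⟨c, hc⟩ |
    ⟨y, hy, hnear⟩
  · exact absurd hbig hsmall.not_ge
  · refine le_trans ?_ (p.abs_inner_sub_le_oracle j c _)
    rw [value]
    nlinarith
  · refine le_trans ?_ (p.probe_le_oracle hlen _)
    have hi := (abs_le.mp ((hgen _ hlen.le).abs_inner_le_of_norm_sub_le p.r_pos.le p.r_le (hv _)
      hsmall.le hy hnear)).1
    have hj := inner_query_add_offset_le hv hlen hs (hchain _ hlen.le) (hgen j le_rfl) hsmall.le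
      hy hnear
    rw [value]
    exact mul_le_mul_of_nonneg_left (by linarith) hη.le

end Consistency

end HardParams

namespace HardParams

variable {E : Type} [NormedAddCommGroup E] [InnerProductSpace ℝ E] {n M : ℕ}
  {p : HardParams} {a : Fin n → E} {v : ℕ → E} {alg : MemAlg M E (ℝ × E)}

lemma mem_eq_or_take_exploredList_succ_eq {T j : ℕ}
    (h : ∀ s < T, (p.exploredList a v alg j (s + 1)).length < j →
      p.value a v (.inr j) (p.query a v alg j s) ≤ (p.oracle a v j (p.query a v alg j s)).1) :
    ∀ t ≤ T,
      (alg.mem (p.oracle a v (j + 1)) t = alg.mem (p.oracle a v j) t ∧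
        p.exploredList a v alg (j + 1) t = p.exploredList a v alg j t) ∨
      (j ≤ (p.exploredList a v alg j t).length ∧ j ≤ (p.exploredList a v alg (j + 1) t).length ∧
        (p.exploredList a v alg (j + 1) t).take j = (p.exploredList a v alg j t).take j) := by
  intro t
  induction t with
  | zero => exact fun _ ↦ .inl ⟨rfl, rfl⟩
  | succ t ih =>
    intro ht
    rcases ih (Nat.le_of_succ_le ht) with ⟨hmem, hlist⟩ | ⟨hlen, hlen', htake⟩
    · have hquery : p.query a v alg (j + 1) t = p.query a v alg j t := by rw [query, query, hmem]
      have hlist' : p.exploredList a v alg (j + 1) (t + 1) = p.exploredList a v alg j (t + 1) := by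
        simp only [exploredList, explored] at hlist ⊢
        rw [hlist, hquery]
      rcases lt_or_ge (p.exploredList a v alg j (t + 1)).length j with hlt | hge
      · have horacle := p.oracle_succ (h t ht hlt)
        rw [query] at horacle
        exact .inl ⟨by rw [MemAlg.mem, MemAlg.mem, hmem, horacle], hlist'⟩
      · rw [hlist']
        exact .inr ⟨hge, hge, rfl⟩
    · obtain ⟨l, hl⟩ := explored_prefix (p := p) (a := a) (p.query a v alg j) t.le_succ
      obtain ⟨l', hl'⟩ := explored_prefix (p := p) (a := a) (p.query a v alg (j + 1)) t.le_succ
      rw [← exploredList, ← exploredList] at hl hl'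
      rw [← hl, ← hl', List.take_append_of_le_length hlen, List.take_append_of_le_length hlen',
        List.length_append, List.length_append]
      exact .inr ⟨Nat.le_add_right_of_le hlen, Nat.le_add_right_of_le hlen', htake⟩

lemma take_exploredList_succ {T j : ℕ}
    (h : ∀ s < T, (p.exploredList a v alg j (s + 1)).length < j →
      p.value a v (.inr j) (p.query a v alg j s) ≤ (p.oracle a v j (p.query a v alg j s)).1) :
    (p.exploredList a v alg (j + 1) T).take j = (p.exploredList a v alg j T).take j := by
  rcases mem_eq_or_take_exploredList_succ_eq h T le_rfl with ⟨-, hlist⟩ | ⟨-, -, htake⟩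
  · rw [hlist]
  · exact htake

lemma take_exploredList_eq {T N : ℕ} (hv : ∀ j, ‖v j‖ ≤ 2)
    (hgen : ∀ i < N, p.IsGenericProbe a v alg T i (v i)) :
    ∀ i ≤ N, (p.exploredList a v alg N T).take i = (p.exploredList a v alg i T).take i := by
  induction N with
  | zero =>
    intro i hi
    rw [Nat.le_zero.mp hi]
  | succ N ih =>
    have hchain := ih fun i hi ↦ hgen i (hi.trans N.lt_succ_self)
    have hstep := take_exploredList_succ fun s hs hlen ↦
      value_probe_le_oracle hv hchain (fun i hi ↦ hgen i (Nat.lt_succ_of_le hi)) hs hlen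
    intro i hi
    rcases hi.eq_or_lt with rfl | hi
    · rfl
    · have hiN := Nat.le_of_lt_succ hi
      rw [← hchain i hiN, ← min_eq_left hiN, ← List.take_take, hstep, List.take_take]

section Minimum

lemma eighth_le_inner_probe_freshSum {T j N : ℕ} (hv : ∀ j, ‖v j‖ ≤ 2) (hj : j < N)
    (hκN : 2 * p.κ * √N ≤ 1 / 8) (hgen : p.IsGenericProbe a v alg T j (v j)) :
    1 / 8 ≤ ⟪v j, freshSum a v N⟫ := by
  have hinner := (abs_le.mp (hgen.abs_inner_le _ (Set.mem_insert _ _))).1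
  have hnorm : p.κ * ‖freshSum a v j‖ ≤ p.κ * (2 * √N) := by
    refine mul_le_mul_of_nonneg_left ((norm_freshSum_le zero_le_two hv j).trans ?_) p.κ_nonneg
    gcongr
  have hfresh : 1 / 4 ≤ ‖freshPart a v j‖ ^ 2 := hgen.quarter_le_norm_sq
  rw [inner_probe_freshSum hj]
  linarith

lemma exists_oracle_le {T N : ℕ} (hv : ∀ j, ‖v j‖ ≤ 2) (hN : 0 < N)
    (hκN : 2 * p.κ * √N ≤ 1 / 8) (hgen : ∀ i < N, p.IsGenericProbe a v alg T i (v i)) :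
    ∃ x, ‖x‖ ≤ 1 ∧ (p.oracle a v N x).1 ≤ -(p.η / (32 * √N)) := by
  have hη := p.η_pos
  have hsqrt : 1 ≤ √(N : ℝ) := Real.one_le_sqrt.mpr (by exact_mod_cast hN)
  have hsmall : p.η / (32 * √N) ≤ p.η / 32 := by
    gcongr
    linarith
  have hη_le := p.η_le
  set x := -(4 * √(N : ℝ))⁻¹ • freshSum a v N with hx
  have hxnorm : ‖x‖ ≤ 1 / 2 := by
    rw [hx, norm_smul, norm_neg, norm_inv, Real.norm_of_nonneg (by positivity),
      inv_mul_le_iff₀ (by positivity)]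
    linarith [norm_freshSum_le (a := a) zero_le_two hv N]
  refine ⟨x, by linarith, p.oracle_le (by linarith) (fun i ↦ ?_) fun j hj ↦ ?_⟩
  · rw [hx, inner_smul_right, inner_row_freshSum, mul_zero, abs_zero]
    linarith
  · have hinner : ⟪v j, x⟫ ≤ -(32 * √(N : ℝ))⁻¹ := by
      rw [hx, inner_smul_right, neg_mul, neg_le_neg_iff]
      calc (32 * √(N : ℝ))⁻¹ = (4 * √(N : ℝ))⁻¹ * (1 / 8) := by field_simp; norm_num
        _ ≤ (4 * √(N : ℝ))⁻¹ * ⟪v j, freshSum a v N⟫ := by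
          gcongr
          exact eighth_le_inner_probe_freshSum hv hj hκN (hgen j hj)
    calc p.η * (⟪v j, x⟫ - p.offset j) ≤ p.η * -(32 * √(N : ℝ))⁻¹ := by
          gcongr
          linarith [p.offset_nonneg j]
      _ = -(p.η / (32 * √N)) := by rw [mul_neg, div_eq_mul_inv]

lemma neg_le_oracle_query {T N s : ℕ} (hv : ∀ j, ‖v j‖ ≤ 2) (hs : s < T)
    (hgen : ∀ i < N, p.IsGenericProbe a v alg T i (v i))
    (hlen : (p.exploredList a v alg N (s + 1)).length < N) :
    -(p.η * (5 * p.r + p.offset (p.exploredList a v alg N (s + 1)).length)) ≤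
      (p.oracle a v N (p.query a v alg N s)).1 := by
  have hη := p.η_pos
  have hmargin : 0 ≤ p.η * (5 * p.r + p.offset (p.exploredList a v alg N (s + 1)).length) :=
    mul_nonneg hη.le (add_nonneg (by linarith [p.r_pos]) (p.offset_nonneg _))
  rcases le_or_gt 2 ‖p.query a v alg N s‖ with hbig | hsmall
  · linarith [p.norm_sub_one_le_oracle (a := a) (v := v) N (p.query a v alg N s)]
  rcases two_le_norm_query_or_row_or_near hs rfl (take_exploredList_eq hv hgen _ hlen.le) with
    hbig | ⟨c, hc⟩ | ⟨y, hy, hnear⟩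
  · exact absurd hbig hsmall.not_ge
  · linarith [p.abs_inner_sub_le_oracle (a := a) (v := v) N c (p.query a v alg N s)]
  · have hinner := (abs_le.mp ((hgen _ hlen).abs_inner_le_of_norm_sub_le p.r_pos.le p.r_le (hv _)
      hsmall.le hy hnear)).1
    refine le_trans ?_ (p.probe_le_oracle hlen _)
    rw [← mul_neg]
    exact mul_le_mul_of_nonneg_left (by linarith) hη.le

end Minimum

section EuclideanSpace

variable {d : ℕ} {a : Fin n → EuclideanSpace ℝ (Fin d)} {v : ℕ → EuclideanSpace ℝ (Fin d)}
  {alg : MemAlg M (EuclideanSpace ℝ (Fin d)) (ℝ × EuclideanSpace ℝ (Fin d))} {T : ℕ} {ε : ℝ}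

lemma oracle_query_le_of_minimizesConvex (ha : ∀ i, ‖a i‖ ≤ 1) (hv : ∀ j, ‖v j‖ ≤ 2) (N : ℕ)
    (hmin : MinimizesConvex d alg T ε) {x : EuclideanSpace ℝ (Fin d)} (hx : ‖x‖ ≤ 1) :
    (p.oracle a v N (p.query a v alg N (T - 1))).1 ≤ (p.oracle a v N x).1 + ε := by
  have hO : IsFirstOrderOracle (fun x ↦ (p.oracle a v N x).1) (p.oracle a v N) := fun x ↦
    ⟨rfl, p.oracle_add_inner_le N x⟩
  exact (hmin _ hO.convexOn (hO.lipschitzWith fun x ↦ p.norm_gradient_le ha hv _ x) _ hO).2 x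
    (mem_closedBall_zero_iff.mpr hx)

lemma lt_length_exploredList {P : ℕ} (ha : ∀ i, ‖a i‖ ≤ 1) (hv : ∀ j, ‖v j‖ ≤ 2) (hT : 0 < T)
    (hmin : MinimizesConvex d alg T ε)
    (hκN : 2 * p.κ * √(p.k * P + 1 : ℕ) ≤ 1 / 8)
    (hε : ε < p.η * (1 / (32 * √(p.k * P + 1 : ℕ)) -
      (5 * p.r + (10 * p.r * (p.k * P) + (2 * p.κ + 5 * p.r) * P))))
    (hgen : ∀ i < p.k * P + 1, p.IsGenericProbe a v alg T i (v i)) :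
    p.k * P < (p.exploredList a v alg (p.k * P + 1) T).length := by
  by_contra! hlen
  obtain ⟨x, hx, hvalue⟩ := exists_oracle_le hv (Nat.succ_pos _) hκN hgen
  have hupper := oracle_query_le_of_minimizesConvex (p := p) ha hv (p.k * P + 1) hmin hx
  have hlower := neg_le_oracle_query hv (Nat.sub_one_lt_of_lt hT) hgen
    (by rwa [Nat.sub_one_add_one hT.ne', Nat.lt_succ_iff])
  rw [Nat.sub_one_add_one hT.ne'] at hlower
  have hoffset := mul_le_mul_of_nonneg_left (p.offset_le hlen) p.η_pos.le
  rw [mul_sub, mul_one_div, mul_add] at hε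
  rw [mul_add] at hlower hε
  linarith

end EuclideanSpace

end HardParams

/-! ### Decoding a short block of exploratory queries -/

lemma exists_block_lt_add {k P m T : ℕ} {τ : ℕ → ℕ} (hk : 0 < k)
    (hτ : StrictMonoOn τ (Set.Iic (k * P))) (hlt : τ (k * P) < T) (hT : T ≤ P * m) :
    ∃ b < P, τ (b * k + (k - 1)) < τ (b * k) + m := by
  by_contra! hlong
  have hstart : ∀ b ≤ P, b * m ≤ τ (b * k) := by
    intro b
    induction b with
    | zero => simp
    | succ b ih =>
      intro hb
      have hbk : b * k + k ≤ k * P := by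
        rw [← Nat.succ_mul, mul_comm]
        exact Nat.mul_le_mul_left k hb
      have hnext : τ (b * k + (k - 1)) < τ (b * k + k) :=
        hτ (Set.mem_Iic.mpr (by omega)) (Set.mem_Iic.mpr hbk) (by omega)
      have := ih (Nat.le_of_succ_le hb)
      have := hlong b hb
      rw [Nat.succ_mul, Nat.succ_mul]
      omega
  have := hstart P le_rfl
  rw [mul_comm P k] at this
  omega

namespace HardParams

variable {E : Type} [NormedAddCommGroup E] [InnerProductSpace ℝ E] {n M : ℕ}

section Window

variable (p : HardParams) (a : Fin n → E)

/-- A `k`-tuple that can arise as a block of exploratory queries. -/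
structure IsExploratoryBlock (y : Fin p.k → E) : Prop where
  norm_lt : ∀ i, ‖y i‖ < 2
  abs_inner_lt : ∀ i c, |⟪a c, y i⟫| < 2 * p.η
  robustlyIndependent : RobustlyIndependent p.r y

variable {p a}

lemma exists_length_explored_eq (x : ℕ → E) {T i : ℕ} (hi : i < (p.explored a x T).length) :
    ∃ s < T, (p.explored a x s).length = i ∧ p.IsExploratory a (p.explored a x s) (x s) := by
  induction T with
  | zero => exact absurd hi (Nat.not_lt_zero i)
  | succ T ih =>
    rcases lt_or_ge i (p.explored a x T).length with h | h
    · obtain ⟨s, hs, h⟩ := ih h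
      exact ⟨s, hs.trans T.lt_succ_self, h⟩
    · rw [explored] at hi
      split_ifs at hi with hE
      · rw [List.length_append, List.length_singleton] at hi
        exact ⟨T, T.lt_succ_self, by omega, hE⟩
      · omega

lemma getElem?_explored (x : ℕ → E) {s t : ℕ} (hst : s < t)
    (hE : p.IsExploratory a (p.explored a x s) (x s)) :
    (p.explored a x t)[(p.explored a x s).length]? = some (x s) := by
  obtain ⟨l, hl⟩ := explored_prefix (p := p) (a := a) x (Nat.succ_le_of_lt hst)
  rw [← hl, explored, if_pos hE, List.append_assoc, List.getElem?_append_right le_rfl]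
  simp

lemma mem_blockSpan_explored (x : ℕ → E) {s t b i j : ℕ} (hij : i < j) (hj : j < p.k)
    (hs : (p.explored a x s).length = b * p.k + i) (ht : (p.explored a x t).length = b * p.k + j)
    (hE : p.IsExploratory a (p.explored a x s) (x s)) :
    x s ∈ blockSpan p.k ((p.explored a x t).length + 1) (p.explored a x t) := by
  have hst : s < t := (length_explored_mono (p := p) (a := a) x).reflect_lt
    (by simp only [hs, ht]; omega)
  refine Submodule.subset_span (List.mem_of_getElem? (i := i) ?_)
  rw [List.take_of_length_le (Nat.le_succ _), blockStart_succ p.k_pos, ht, mul_comm b p.k,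
    Nat.mul_add_div p.k_pos, Nat.div_eq_of_lt hj, add_zero, List.getElem?_drop, ← hs]
  exact getElem?_explored x hst hE

lemma exists_isExploratoryBlock (x : ℕ → E) {T P m : ℕ}
    (hlen : p.k * P < (p.explored a x T).length) (hT : T ≤ P * m) :
    ∃ t, ∃ σ : Fin p.k → Fin m, p.IsExploratoryBlock a fun i ↦ x (t + σ i) := by
  choose! τ hτT hτlen hτE using fun i ↦ exists_length_explored_eq (p := p) (a := a) x (T := T)
    (i := i)
  have hmono : StrictMonoOn τ (Set.Iio (p.explored a x T).length) := fun i hi j hj hij ↦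
    (length_explored_mono (p := p) (a := a) x).reflect_lt (by simpa [hτlen i hi, hτlen j hj])
  obtain ⟨b, hb, hblock⟩ := exists_block_lt_add p.k_pos
    (hmono.mono (Set.Iic_subset_Iio.mpr hlen)) (hτT _ hlen) hT
  have hbk : b * p.k + p.k ≤ p.k * P := by
    rw [← Nat.succ_mul, mul_comm]
    exact Nat.mul_le_mul_left _ hb
  have hmem (i : Fin p.k) : b * p.k + i < (p.explored a x T).length := by omega
  have hle (i : Fin p.k) : τ (b * p.k) ≤ τ (b * p.k + i) :=
    hmono.monotoneOn (Set.mem_Iio.mpr (by omega)) (hmem i) (Nat.le_add_right _ _)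
  have hlt (i : Fin p.k) : τ (b * p.k + i) < τ (b * p.k) + m :=
    (hmono.monotoneOn (hmem i) (Set.mem_Iio.mpr (by omega)) (by omega)).trans_lt hblock
  refine ⟨τ (b * p.k), fun i ↦ ⟨τ (b * p.k + i) - τ (b * p.k),
    Nat.sub_lt_left_of_lt_add (hle i) (hlt i)⟩, ?_⟩
  simp only [Nat.add_sub_cancel' (hle _)]
  refine ⟨fun i ↦ (hτE _ (hmem i)).norm_lt, fun i ↦ (hτE _ (hmem i)).abs_inner_lt,
    fun i y hy ↦ (hτE _ (hmem i)).lt_norm_sub y (Submodule.span_le.mpr ?_ hy)⟩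
  rintro _ ⟨j, hj, rfl⟩
  exact mem_blockSpan_explored x hj i.isLt (hτlen _ (hmem j)) (hτlen _ (hmem i)) (hτE _ (hmem j))

end Window

section Decode

variable (p : HardParams) (a : Fin n → E) (v : ℕ → E) (alg : MemAlg M E (ℝ × E))

/-- The memory states of the algorithm started from the memory `μ` when its `s`-th query is
answered by the piece `c s`. -/
noncomputable def decode (μ : Fin M → Bool) (c : ℕ → Piece n) : ℕ → (Fin M → Bool)
  | 0 => μ
  | s + 1 => alg.update (decode μ c s) (alg.query (decode μ c s))
      (p.value a v (c s) (alg.query (decode μ c s)),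
        p.gradient a v (c s) (alg.query (decode μ c s)))

/-- The infinite sequence of pieces given by a finite code of length `m`, with `N` probes. -/
def extendCode {N m : ℕ} (c : Fin m → Option (Fin n × Bool) ⊕ Fin N) (s : ℕ) : Piece n :=
  if h : s < m then Sum.map id Fin.val (c ⟨s, h⟩) else .inl none

/-- The queries made at the relative times `σ` from the memory `μ` and the answer code `c`. -/
noncomputable def decodedBlock {N m : ℕ} (μ : Fin M → Bool)
    (c : Fin m → Option (Fin n × Bool) ⊕ Fin N) (σ : Fin p.k → Fin m) (i : Fin p.k) : E :=
  alg.query (p.decode a v alg μ (extendCode c) (σ i))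

variable {p a v alg}

lemma decode_mem_eq_mem {N t m : ℕ} {c : ℕ → Piece n}
    (hc : ∀ s < m, c s = p.pick a v N (p.query a v alg N (t + s))) :
    ∀ s ≤ m, p.decode a v alg (alg.mem (p.oracle a v N) t) c s =
      alg.mem (p.oracle a v N) (t + s) := by
  intro s
  induction s with
  | zero => exact fun _ ↦ rfl
  | succ s ih =>
    intro hs
    rw [decode, ih (Nat.le_of_succ_le hs), hc s hs]
    rfl

lemma decode_congr {a' : Fin n → E} {c : ℕ → Piece n}
    (hc : ∀ s i b, c s = .inl (some (i, b)) → a i = a' i) (μ : Fin M → Bool) (s : ℕ) :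
    p.decode a v alg μ c s = p.decode a' v alg μ c s := by
  have hpiece (s : ℕ) (x : E) : p.value a v (c s) x = p.value a' v (c s) x ∧
      p.gradient a v (c s) x = p.gradient a' v (c s) x := by
    match hcs : c s with
    | .inl none | .inr j => exact ⟨rfl, rfl⟩
    | .inl (some (i, b)) => simp only [value, gradient, hc s i b hcs, and_self]
  induction s with
  | zero => rfl
  | succ s ih => rw [decode, decode, ih, (hpiece s _).1, (hpiece s _).2]

lemma decodedBlock_congr {a' : Fin n → E} {N m : ℕ} {c : Fin m → Option (Fin n × Bool) ⊕ Fin N}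
    (hc : ∀ s i b, c s = .inl (some (i, b)) → a i = a' i) (μ : Fin M → Bool)
    (σ : Fin p.k → Fin m) :
    p.decodedBlock a v alg μ c σ = p.decodedBlock a' v alg μ c σ := by
  funext i
  refine congrArg alg.query (decode_congr (fun s l b h ↦ ?_) μ _)
  rw [extendCode] at h
  split_ifs at h with hs
  · cases hcs : c ⟨s, hs⟩ with
    | inl o => exact hc ⟨s, hs⟩ l b (by simpa [hcs] using h)
    | inr j => simp [hcs] at h
  · simp at h

lemma exists_isExploratoryBlock_decodedBlock {N T P m : ℕ}
    (hlen : p.k * P < (p.exploredList a v alg N T).length) (hT : T ≤ P * m) :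
    ∃ (μ : Fin M → Bool) (c : Fin m → Option (Fin n × Bool) ⊕ Fin N) (σ : Fin p.k → Fin m),
      p.IsExploratoryBlock a (p.decodedBlock a v alg μ c σ) := by
  obtain ⟨t, σ, hblock⟩ := exists_isExploratoryBlock _ hlen hT
  have hcode (x : E) : ∃ c : Option (Fin n × Bool) ⊕ Fin N,
      Sum.map id Fin.val c = p.pick a v N x := by
    have hpick := p.pick_mem_available a v N x
    match p.pick a v N x, hpick with
    | .inl c, _ => exact ⟨.inl c, rfl⟩
    | .inr j, hj => exact ⟨.inr ⟨j, hj j rfl⟩, rfl⟩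
  choose code hcode using hcode
  refine ⟨alg.mem (p.oracle a v N) t, fun s ↦ code (p.query a v alg N (t + s)), σ, ?_⟩
  convert hblock with i
  rw [decodedBlock, decode_mem_eq_mem (m := m) (fun s hs ↦ ?_) _ (σ i).isLt.le, query]
  rw [extendCode, dif_pos hs, hcode]

end Decode

end HardParams

/-! ### Counting hard instances -/

section Counting

lemma card_le_mul_pow_of_agree {ι X : Type*} [Fintype ι] [Fintype X] {R : Finset ι}
    {B : Finset (ι → X)} {K : ℝ} (hK : 0 ≤ K)
    (h : ∀ A₀ ∈ B, ∃ C : Finset X, (#C : ℝ) ≤ K ∧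
      ∀ A ∈ B, (∀ i ∈ R, A i = A₀ i) → ∀ i, A i ∈ C) :
    (#B : ℝ) ≤ K ^ (Fintype.card ι - #R) * (Fintype.card X : ℝ) ^ #R := by
  classical
  set f : (ι → X) → (R → X) := fun A i ↦ A i
  have hfiber : ∀ b ∈ B.image f, (#{A ∈ B | f A = b} : ℝ) ≤ K ^ (Fintype.card ι - #R) := by
    simp only [Finset.forall_mem_image]
    intro A₀ hA₀
    obtain ⟨C, hC, hmem⟩ := h A₀ hA₀
    have hsub : {A ∈ B | f A = f A₀} ⊆
        Fintype.piFinset fun i ↦ if i ∈ R then {A₀ i} else C := by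
      intro A hA
      rw [Finset.mem_filter] at hA
      have hagree : ∀ i ∈ R, A i = A₀ i := fun i hi ↦ congrFun hA.2 ⟨i, hi⟩
      rw [Fintype.mem_piFinset]
      intro i
      split_ifs with hi
      · exact Finset.mem_singleton.mpr (hagree i hi)
      · exact hmem A hA.1 hagree i
    have hcard := Finset.card_le_card hsub
    simp only [Fintype.card_piFinset, apply_ite Finset.card, Finset.card_singleton,
      Finset.prod_ite, Finset.prod_const, one_pow, one_mul, Finset.filter_notMem_eq_sdiff,
      Finset.card_univ_sdiff] at hcard
    calc (#{A ∈ B | f A = f A₀} : ℝ) ≤ (#C : ℝ) ^ (Fintype.card ι - #R) := by exact_mod_cast hcard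
      _ ≤ K ^ (Fintype.card ι - #R) := by gcongr
  have himage : #(B.image f) ≤ Fintype.card X ^ #R := by
    simpa using Finset.card_le_univ (B.image f)
  calc (#B : ℝ) = ∑ b ∈ B.image f, (#{A ∈ B | f A = b} : ℝ) := by
        exact_mod_cast Finset.card_eq_sum_card_image f B
    _ ≤ #(B.image f) * K ^ (Fintype.card ι - #R) := by
        simpa using Finset.sum_le_card_nsmul _ _ _ hfiber
    _ ≤ K ^ (Fintype.card ι - #R) * (Fintype.card X : ℝ) ^ #R := by
        rw [mul_comm]
        gcongr
        exact_mod_cast himage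

/-- The infinite sequence extending a finite one by a default value. -/
noncomputable def extendSeq {Ω : Type*} [Inhabited Ω] {N : ℕ} (V : Fin N → Ω) : ℕ → Ω :=
  Function.extend Fin.val V fun _ ↦ default

lemma extendSeq_snoc_of_lt {Ω : Type*} [Inhabited Ω] {N : ℕ} (V : Fin N → Ω) (ω : Ω) {i : ℕ}
    (hi : i < N) : extendSeq (Fin.snoc V ω : Fin (N + 1) → Ω) i = extendSeq V i := by
  have hsnoc := Fin.val_injective.extend_apply (Fin.snoc V ω : Fin (N + 1) → Ω)
    (fun _ ↦ default) (Fin.castSucc ⟨i, hi⟩)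
  rw [Fin.snoc_castSucc] at hsnoc
  exact hsnoc.trans (Fin.val_injective.extend_apply V (fun _ ↦ default) ⟨i, hi⟩).symm

lemma extendSeq_snoc_last {Ω : Type*} [Inhabited Ω] {N : ℕ} (V : Fin N → Ω) (ω : Ω) :
    extendSeq (Fin.snoc V ω : Fin (N + 1) → Ω) N = ω := by
  have hsnoc := Fin.val_injective.extend_apply (Fin.snoc V ω : Fin (N + 1) → Ω)
    (fun _ ↦ default) (Fin.last N)
  rwa [Fin.snoc_last] at hsnoc

open scoped Classical in
lemma pow_le_card_forall_extendSeq {Ω : Type*} [Fintype Ω] [Inhabited Ω]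
    {G : ℕ → (ℕ → Ω) → Ω → Prop} {g : ℝ} (hg : 0 ≤ g)
    (hG : ∀ j V V', (∀ i < j, V i = V' i) → G j V = G j V') {N : ℕ}
    (hcard : ∀ j < N, ∀ V, g ≤ #{ω | G j V ω}) :
    g ^ N ≤ #{V : Fin N → Ω | ∀ j < N, G j (extendSeq V) (extendSeq V j)} := by
  induction N with
  | zero => simp
  | succ N ih =>
    set A : Finset (Fin N → Ω) := {V | ∀ j < N, G j (extendSeq V) (extendSeq V j)}
    have hsnoc : #(A.sigma fun V ↦ ({ω | G N (extendSeq V) ω} : Finset Ω)) ≤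
        #{V : Fin (N + 1) → Ω | ∀ j < N + 1, G j (extendSeq V) (extendSeq V j)} := by
      refine Finset.card_le_card_of_injOn (fun s ↦ Fin.snoc s.1 s.2) ?_ ?_
      · rintro ⟨V, ω⟩ hV
        simp only [Finset.coe_sigma, Set.mem_sigma_iff, Finset.mem_coe, A, Finset.mem_filter_univ]
          at hV ⊢
        intro j hj
        have hcongr := hG j _ _ fun i hi ↦ extendSeq_snoc_of_lt V ω
          (hi.trans_le (Nat.le_of_lt_succ hj))
        rcases (Nat.le_of_lt_succ hj).lt_or_eq with hj | rfl
        · rw [hcongr, extendSeq_snoc_of_lt V ω hj]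
          exact hV.1 j hj
        · rw [hcongr, extendSeq_snoc_last]
          exact hV.2
      · rintro ⟨V, ω⟩ - ⟨V', ω'⟩ - heq
        obtain ⟨rfl, rfl⟩ := Fin.snoc_injective2 heq
        rfl
    rw [Finset.card_sigma] at hsnoc
    calc g ^ (N + 1) = g ^ N * g := pow_succ _ _
      _ ≤ #A * g := by
        gcongr
        exact ih fun j hj ↦ hcard j (hj.trans N.lt_succ_self)
      _ ≤ ∑ V ∈ A, (#{ω | G N (extendSeq V) ω} : ℝ) := by
        simpa using Finset.card_nsmul_le_sum A _ g fun V _ ↦ hcard N N.lt_succ_self (extendSeq V)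
      _ ≤ _ := by exact_mod_cast hsnoc

end Counting

/-- The row vector with grid coordinates `α`, scaled into the unit ball. -/
noncomputable def gridRow {d L : ℕ} (α : Fin d → Fin L) : EuclideanSpace ℝ (Fin d) :=
  (L * √d : ℝ)⁻¹ • gridVec α

lemma norm_gridRow_le {d L : ℕ} (α : Fin d → Fin L) : ‖gridRow α‖ ≤ 1 := by
  rw [gridRow, norm_smul, norm_inv, Real.norm_of_nonneg (by positivity)]
  exact inv_mul_le_one_of_le₀ (by simpa using norm_gridVec_le α) (by positivity)

/-- The rows named in an answer code. -/
noncomputable def namedRows {n N m : ℕ} (c : Fin m → Option (Fin n × Bool) ⊕ Fin N) :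
    Finset (Fin n) :=
  open scoped Classical in {i | ∃ s b, c s = .inl (some (i, b))}

lemma card_namedRows_le {n N m : ℕ} (c : Fin m → Option (Fin n × Bool) ⊕ Fin N) :
    #(namedRows c) ≤ m := by
  classical
  choose time sign htime using fun i : namedRows c ↦ (Finset.mem_filter_univ i.1).mp i.2
  have htime_inj : time.Injective := fun i j hij ↦ by
    have := (htime i).symm.trans (hij ▸ htime j)
    simp only [Sum.inl.injEq, Option.some.injEq, Prod.mk.injEq] at this
    exact Subtype.ext this.1
  simpa using Fintype.card_le_of_injective time htime_inj

namespace HardParams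

section Generic

variable {d n M : ℕ} [NeZero d] {p : HardParams} {a : Fin n → EuclideanSpace ℝ (Fin d)}
  {alg : MemAlg M (EuclideanSpace ℝ (Fin d)) (ℝ × EuclideanSpace ℝ (Fin d))} {T N B : ℕ} {t : ℝ}

open scoped Classical in
lemma card_isGenericProbe_ge (v : ℕ → EuclideanSpace ℝ (Fin d)) {j : ℕ} (hj : j < N)
    (ht : 0 ≤ t) (hκ : p.κ = 2 * (t / √d))
    (hW : ((T : ℝ) + 1) * (2 * Real.exp (-(t ^ 2 / 2))) ≤ 1 / 4) (hU : (n + N) * 64 ≤ d)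
    (hB : 2 * √p.k / p.r + 2 ≤ B) (hBd : (0.76 : ℝ) ^ d ≤ 1 / (8 * (B : ℝ) ^ p.k)) :
    (4 : ℝ) ^ d / (8 * (B : ℝ) ^ p.k) ≤
      #{ω : (Fin d → Bool) × (Fin d → Bool) | p.IsGenericProbe a v alg T j (signDiff ω)} := by
  have hk : 0 < √(p.k : ℝ) := Real.sqrt_pos.mpr (by exact_mod_cast p.k_pos)
  set W : Finset (EuclideanSpace ℝ (Fin d)) :=
    insert (freshSum a v j) ((Finset.range T).image (p.query a v alg j)) with hWdef
  have hWcard : (#W : ℝ) ≤ T + 1 := by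
    have := (Finset.card_insert_le (freshSum a v j) _).trans
      (Nat.succ_le_succ (Finset.card_image_le (s := Finset.range T) (f := p.query a v alg j)))
    rw [Finset.card_range] at this
    exact_mod_cast this
  have hU' : Module.finrank ℝ (revealedSpan a v j) * 64 ≤ Fintype.card (Fin d) := by
    have := finrank_revealedSpan_le a v j
    rw [Fintype.card_fin]
    omega
  have hcount := card_isGeneric_signDiff_ge ht (div_pos p.r_pos hk)
    ((mul_le_mul_of_nonneg_right hWcard (by positivity)).trans hW) hU'
    (finrank_blockSpan_le p.k_pos j (p.exploredList a v alg j T)) (by rwa [div_div_eq_mul_div])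
    (by rwa [Fintype.card_fin])
  rw [Fintype.card_fin, ← hκ, mul_div_cancel₀ _ hk.ne'] at hcount
  have hWcoe : (W : Set (EuclideanSpace ℝ (Fin d))) =
      insert (freshSum a v j) (p.query a v alg j '' Set.Iio T) := by
    rw [hWdef, Finset.coe_insert, Finset.coe_image, Finset.coe_range]
  rw [hWcoe] at hcount
  exact hcount

open scoped Classical in
lemma card_forall_isGenericProbe_ge (ht : 0 ≤ t) (hκ : p.κ = 2 * (t / √d))
    (hW : ((T : ℝ) + 1) * (2 * Real.exp (-(t ^ 2 / 2))) ≤ 1 / 4) (hU : (n + N) * 64 ≤ d)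
    (hB : 2 * √p.k / p.r + 2 ≤ B) (hBd : (0.76 : ℝ) ^ d ≤ 1 / (8 * (B : ℝ) ^ p.k)) :
    ((4 : ℝ) ^ d / (8 * (B : ℝ) ^ p.k)) ^ N ≤
      #{V : Fin N → (Fin d → Bool) × (Fin d → Bool) |
        ∀ j < N, p.IsGenericProbe a (fun i ↦ signDiff (extendSeq V i)) alg T j
          (signDiff (extendSeq V j))} :=
  pow_le_card_forall_extendSeq
    (G := fun j V ω ↦ p.IsGenericProbe a (fun i ↦ signDiff (V i)) alg T j (signDiff ω))
    (by positivity)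
    (fun j V V' h ↦ funext fun ω ↦
      congrFun (isGenericProbe_congr fun i hi ↦ by rw [h i hi]) (signDiff ω))
    fun j hj V ↦ card_isGenericProbe_ge _ hj ht hκ hW hU hB hBd

end Generic

section Bad

variable {d n M L m N : ℕ} [NeZero d] {p : HardParams} {v : ℕ → EuclideanSpace ℝ (Fin d)}
  {alg : MemAlg M (EuclideanSpace ℝ (Fin d)) (ℝ × EuclideanSpace ℝ (Fin d))}

open scoped Classical in
lemma card_forall_abs_inner_gridRow_lt_le (hL : 1 ≤ p.η * L)
    {x : Fin p.k → EuclideanSpace ℝ (Fin d)}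
    (hx : RobustlyIndependent p.r x) (hnorm : ∀ i, ‖x i‖ ≤ 2) :
    (#{α : Fin d → Fin L | ∀ i, |⟪gridRow α, x i⟫| < 2 * p.η} : ℝ) ≤
      (8 * p.η * d / p.r) ^ p.k * L ^ d := by
  have hd : (0 : ℝ) < √d := Real.sqrt_pos.mpr (by exact_mod_cast NeZero.pos d)
  have hr := p.r_pos
  have hL0 : (0 : ℝ) < L := by
    by_contra! h
    nlinarith [p.η_pos]
  have hcount := card_forall_abs_inner_gridVec_le_le (by exact_mod_cast hL0) p.r_pos
    (B := 2 * p.η * (L * √d)) (by rw [Fintype.card_fin]; nlinarith) hx hnorm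
  rw [Fintype.card_fin] at hcount
  have hratio : 4 * (2 * p.η * (L * √d)) * √d / (p.r * L) = 8 * p.η * d / p.r := by
    field_simp
    rw [Real.sq_sqrt d.cast_nonneg]
    ring
  rw [hratio] at hcount
  refine le_trans ?_ hcount
  gcongr with α _
  rw [gridRow, real_inner_smul_left, abs_mul, abs_of_pos (by positivity),
    inv_mul_lt_iff₀ (by positivity)]
  intro h
  linarith

open scoped Classical in
lemma card_isExploratoryBlock_decodedBlock_le (hL : 1 ≤ p.η * L) (hq : 8 * p.η * d / p.r ≤ 1)
    (hmn : m ≤ n) (μ : Fin M → Bool) (c : Fin m → Option (Fin n × Bool) ⊕ Fin N)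
    (σ : Fin p.k → Fin m) :
    (#{A : Fin n → Fin d → Fin L | p.IsExploratoryBlock (fun i ↦ gridRow (A i))
      (p.decodedBlock (fun i ↦ gridRow (A i)) v alg μ c σ)} : ℝ) ≤
      ((8 * p.η * d / p.r) ^ p.k) ^ (n - m) * ((L : ℝ) ^ d) ^ n := by
  have hη := p.η_pos
  have hr := p.r_pos
  set q := (8 * p.η * d / p.r) ^ p.k
  have hq0 : 0 ≤ q := by positivity
  have hq1 : q ≤ 1 := pow_le_one₀ (by positivity) hq
  have hR := card_namedRows_le c
  have hcount := card_le_mul_pow_of_agree (R := namedRows c) (K := q * (L : ℝ) ^ d)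
    (B := ({A : Fin n → Fin d → Fin L | p.IsExploratoryBlock (fun i ↦ gridRow (A i))
      (p.decodedBlock (fun i ↦ gridRow (A i)) v alg μ c σ)} : Finset _)) (by positivity) (by
    simp only [Finset.mem_filter_univ]
    refine fun A₀ hA₀ ↦ ⟨_, card_forall_abs_inner_gridRow_lt_le hL hA₀.robustlyIndependent
      fun i ↦ (hA₀.norm_lt i).le, fun A hA hagree l ↦ ?_⟩
    rw [Finset.mem_filter_univ]
    intro i
    rw [← decodedBlock_congr (a := fun i ↦ gridRow (A i)) (fun s l b hs ↦ ?_) μ σ]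
    · exact hA.abs_inner_lt i l
    · rw [hagree l ((Finset.mem_filter_univ l).mpr ⟨s, b, hs⟩)])
  refine hcount.trans ?_
  rw [Fintype.card_fin, Fintype.card_fun, Fintype.card_fin, Fintype.card_fin, mul_pow, mul_assoc,
    Nat.cast_pow, ← pow_add, Nat.sub_add_cancel (hR.trans hmn)]
  gcongr ?_ * _
  exact pow_le_pow_of_le_one hq0 hq1 (Nat.sub_le_sub_left hR n)

open scoped Classical in
lemma card_exists_isExploratoryBlock_decodedBlock_le (hL : 1 ≤ p.η * L)
    (hq : 8 * p.η * d / p.r ≤ 1) (hmn : m ≤ n) :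
    (#{A : Fin n → Fin d → Fin L | ∃ (μ : Fin M → Bool)
      (c : Fin m → Option (Fin n × Bool) ⊕ Fin N) (σ : Fin p.k → Fin m),
      p.IsExploratoryBlock (fun i ↦ gridRow (A i))
        (p.decodedBlock (fun i ↦ gridRow (A i)) v alg μ c σ)} : ℝ) ≤
      2 ^ M * (2 * n + 1 + N) ^ m * m ^ p.k *
        (((8 * p.η * d / p.r) ^ p.k) ^ (n - m) * ((L : ℝ) ^ d) ^ n) := by
  set Code := (Fin M → Bool) × (Fin m → Option (Fin n × Bool) ⊕ Fin N) × (Fin p.k → Fin m)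
  set bad : Code → Finset (Fin n → Fin d → Fin L) := fun z ↦
    {A | p.IsExploratoryBlock (fun i ↦ gridRow (A i))
      (p.decodedBlock (fun i ↦ gridRow (A i)) v alg z.1 z.2.1 z.2.2)}
  have hCode : (Fintype.card Code : ℝ) = 2 ^ M * (2 * n + 1 + N) ^ m * m ^ p.k := by
    simp [Code]
    ring
  rw [← hCode, ← nsmul_eq_mul, ← Finset.card_univ]
  refine le_trans ?_ (Finset.sum_le_card_nsmul Finset.univ (fun z ↦ (#(bad z) : ℝ)) _ fun z _ ↦
    card_isExploratoryBlock_decodedBlock_le hL hq hmn z.1 z.2.1 z.2.2)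
  have hunion : (#(Finset.univ.biUnion bad) : ℝ) ≤ ∑ z, (#(bad z) : ℝ) := by
    exact_mod_cast Finset.card_biUnion_le
  refine le_trans ?_ hunion
  gcongr
  intro A hA
  obtain ⟨μ, c, σ, h⟩ := (Finset.mem_filter_univ A).mp hA
  exact Finset.mem_biUnion.mpr ⟨(μ, c, σ), Finset.mem_univ _, (Finset.mem_filter_univ A).mpr h⟩

end Bad

section Tradeoff

variable {d n M m P T B : ℕ} {p : HardParams} {t ε : ℝ}
  {alg : MemAlg M (EuclideanSpace ℝ (Fin d)) (ℝ × EuclideanSpace ℝ (Fin d))}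

/-- The numerical conditions under which many sequences of `k * P + 1` probes in dimension `d` are
generic against `n` rows and `T` queries, and under which generic probes force every minimizer of
accuracy `ε` to make more than `k * P` exploratory queries. Here `t` is the tail parameter of the
concentration inequality and `B` the resolution of the net of the ball of a block span. -/
structure IsAdmissible (p : HardParams) (d n P T B : ℕ) (t ε : ℝ) : Prop where
  t_nonneg : 0 ≤ t
  κ_eq : p.κ = 2 * (t / √d)
  tail_le : ((T : ℝ) + 1) * (2 * Real.exp (-(t ^ 2 / 2))) ≤ 1 / 4
  dim_le : (n + (p.k * P + 1)) * 64 ≤ d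
  net_le : 2 * √p.k / p.r + 2 ≤ B
  pow_le : (0.76 : ℝ) ^ d ≤ 1 / (8 * (B : ℝ) ^ p.k)
  κ_mul_sqrt_le : 2 * p.κ * √(p.k * P + 1 : ℕ) ≤ 1 / 8
  accuracy_lt : ε < p.η * (1 / (32 * √(p.k * P + 1 : ℕ)) -
    (5 * p.r + (10 * p.r * (p.k * P) + (2 * p.κ + 5 * p.r) * P)))

namespace IsAdmissible

lemma net_pos (h : p.IsAdmissible d n P T B t ε) : (0 : ℝ) < B := by
  have := div_nonneg (mul_nonneg zero_le_two (Real.sqrt_nonneg p.k)) p.r_pos.le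
  linarith [h.net_le]

variable [NeZero d]

open scoped Classical in
lemma card_isGenericProbe_ge (h : p.IsAdmissible d n P T B t ε)
    (a : Fin n → EuclideanSpace ℝ (Fin d)) :
    ((4 : ℝ) ^ d / (8 * (B : ℝ) ^ p.k)) ^ (p.k * P + 1) ≤
      #{V : Fin (p.k * P + 1) → (Fin d → Bool) × (Fin d → Bool) |
        ∀ j < p.k * P + 1, p.IsGenericProbe a (fun i ↦ signDiff (extendSeq V i)) alg T j
          (signDiff (extendSeq V j))} :=
  card_forall_isGenericProbe_ge h.t_nonneg h.κ_eq h.tail_le h.dim_le h.net_le h.pow_le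

lemma succ_le_of_minimizesConvex (h : p.IsAdmissible d n P T B t ε) (hT : 0 < T)
    (hmin : MinimizesConvex d alg T ε) : p.k * P + 1 ≤ T := by
  classical
  have := h.net_pos
  have hpos : 0 < ((4 : ℝ) ^ d / (8 * (B : ℝ) ^ p.k)) ^ (p.k * P + 1) := by positivity
  have hcard := hpos.trans_le (h.card_isGenericProbe_ge (alg := alg) fun _ ↦ 0)
  obtain ⟨V, hV⟩ := Finset.card_pos.mp (by exact_mod_cast hcard)
  exact (lt_length_exploredList (by simp) (fun j ↦ norm_signDiff_le _) hT hmin h.κ_mul_sqrt_le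
    h.accuracy_lt ((Finset.mem_filter_univ V).mp hV)).trans_le (length_explored_le _ T)

lemma one_le_of_le_mul (h : p.IsAdmissible d n P T B t ε) (hT : 0 < T)
    (hmin : MinimizesConvex d alg T ε) (hq : 8 * p.η * d / p.r ≤ 1) (hmn : m ≤ n)
    (hTP : T ≤ P * m) :
    1 ≤ (8 * (B : ℝ) ^ p.k) ^ (p.k * P + 1) * (2 ^ M * (2 * n + 1 + (p.k * P + 1 : ℕ)) ^ m *
      m ^ p.k * ((8 * p.η * d / p.r) ^ p.k) ^ (n - m)) := by
  classical
  obtain ⟨L, hL⟩ := exists_nat_ge (1 / p.η)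
  have hL0 : (0 : ℝ) < L := (one_div_pos.mpr p.η_pos).trans_le hL
  have hB := h.net_pos
  have hcount := Finset.card_nsmul_le_card_nsmul
    (fun (A : Fin n → Fin d → Fin L) (V : Fin (p.k * P + 1) → (Fin d → Bool) × (Fin d → Bool)) ↦
      ∀ j < p.k * P + 1, p.IsGenericProbe (fun i ↦ gridRow (A i))
        (fun i ↦ signDiff (extendSeq V i)) alg T j (signDiff (extendSeq V j)))
    (s := Finset.univ) (t := Finset.univ) (fun A _ ↦ h.card_isGenericProbe_ge (alg := alg) _)
    fun V _ ↦ (Nat.cast_le.mpr (Finset.card_le_card fun A hA ↦ (Finset.mem_filter_univ A).mpr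
      (exists_isExploratoryBlock_decodedBlock (lt_length_exploredList (fun i ↦ norm_gridRow_le _)
        (fun j ↦ norm_signDiff_le _) hT hmin h.κ_mul_sqrt_le h.accuracy_lt
        ((Finset.mem_filter_univ A).mp hA)) hTP))).trans
      (card_exists_isExploratoryBlock_decodedBlock_le ((div_le_iff₀' p.η_pos).mp hL) hq hmn)
  have hrows : (Fintype.card (Fin n → Fin d → Fin L) : ℝ) = ((L : ℝ) ^ d) ^ n := by simp
  have hprobes : (Fintype.card (Fin (p.k * P + 1) → (Fin d → Bool) × (Fin d → Bool)) : ℝ) =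
      ((4 : ℝ) ^ d) ^ (p.k * P + 1) := by
    simp [← mul_pow]
  rw [Finset.card_univ, Finset.card_univ, nsmul_eq_mul, nsmul_eq_mul, hrows, hprobes, div_pow,
    ← mul_div_assoc, div_le_iff₀ (by positivity)] at hcount
  refine le_of_mul_le_mul_left ?_
    (show 0 < ((L : ℝ) ^ d) ^ n * ((4 : ℝ) ^ d) ^ (p.k * P + 1) by positivity)
  rw [mul_one]
  exact hcount.trans_eq (by ring)

end IsAdmissible

end Tradeoff

end HardParams

/-! ### Choice of parameters -/

lemma one_le_log_of_three_le {x : ℝ} (hx : 3 ≤ x) : 1 ≤ Real.log x := by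
  rw [Real.le_log_iff_exp_le (by linarith)]
  linarith [Real.exp_one_lt_d9]

/-- The regime in which `P` blocks of `k` exploratory queries can be forced in dimension `d`. -/
structure IsBlockScale (d k P : ℕ) : Prop where
  le_dim : (10 : ℝ) ^ 17 ≤ d
  length_pos : 0 < k
  count_pos : 0 < P
  cube_mul_le : (P : ℝ) ^ 3 * k * Real.log d ≤ d / 10 ^ 8

namespace IsBlockScale

variable {d k P T M : ℕ}

lemma dim_pos (h : IsBlockScale d k P) : (0 : ℝ) < d :=
  lt_of_lt_of_le (by norm_num) h.le_dim

lemma one_le_length (h : IsBlockScale d k P) : (1 : ℝ) ≤ k :=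
  Nat.one_le_cast.mpr h.length_pos

lemma one_le_count (h : IsBlockScale d k P) : (1 : ℝ) ≤ P :=
  Nat.one_le_cast.mpr h.count_pos

lemma one_le_log (h : IsBlockScale d k P) : 1 ≤ Real.log d :=
  one_le_log_of_three_le (by linarith [h.le_dim])

lemma le_sqrt_dim (h : IsBlockScale d k P) : 10 ^ 8 ≤ √(d : ℝ) :=
  Real.le_sqrt_of_sq_le (le_trans (by norm_num) h.le_dim)

lemma length_mul_log_le (h : IsBlockScale d k P) : k * Real.log d ≤ d / 10 ^ 8 := by
  have := h.one_le_log
  refine le_trans ?_ h.cube_mul_le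
  rw [mul_assoc]
  exact le_mul_of_one_le_left (by positivity) (one_le_pow₀ h.one_le_count)

lemma length_le (h : IsBlockScale d k P) : (k : ℝ) ≤ d / 10 ^ 8 :=
  (le_mul_of_one_le_right k.cast_nonneg h.one_le_log).trans h.length_mul_log_le

lemma sq_mul_log_mul_succ_le (h : IsBlockScale d k P) :
    (P : ℝ) ^ 2 * Real.log d * (k * P + 1 : ℕ) ≤ 2 * d / 10 ^ 8 := by
  have hsucc : ((k * P + 1 : ℕ) : ℝ) ≤ 2 * (k * P) := by
    have := one_le_mul_of_one_le_of_one_le h.one_le_length h.one_le_count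
    push_cast
    linarith
  have := h.one_le_log
  calc (P : ℝ) ^ 2 * Real.log d * (k * P + 1 : ℕ)
      ≤ P ^ 2 * Real.log d * (2 * (k * P)) := by gcongr
    _ = 2 * (P ^ 3 * k * Real.log d) := by ring
    _ ≤ 2 * d / 10 ^ 8 := by linarith [h.cube_mul_le]

lemma succ_le (h : IsBlockScale d k P) : ((k * P + 1 : ℕ) : ℝ) ≤ 2 * d / 10 ^ 8 :=
  (le_mul_of_one_le_left (Nat.cast_nonneg _) (one_le_mul_of_one_le_of_one_le
    (one_le_pow₀ h.one_le_count) h.one_le_log)).trans h.sq_mul_log_mul_succ_le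

lemma count_mul_sqrt_log_mul_sqrt_succ_le (h : IsBlockScale d k P) :
    P * √(Real.log d) * √(k * P + 1 : ℕ) ≤ 1.5 / 10 ^ 4 * √d := by
  have := h.one_le_log
  refine le_of_sq_le_sq ?_ (by positivity)
  rw [mul_pow, mul_pow, mul_pow, Real.sq_sqrt (by positivity), Real.sq_sqrt (by positivity),
    Real.sq_sqrt d.cast_nonneg]
  linarith [h.sq_mul_log_mul_succ_le, h.dim_pos]

lemma sqrt_log_mul_sqrt_succ_le (h : IsBlockScale d k P) :
    √(Real.log d) * √(k * P + 1 : ℕ) ≤ 1.5 / 10 ^ 4 * √d := by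
  refine le_trans ?_ h.count_mul_sqrt_log_mul_sqrt_succ_le
  rw [mul_assoc]
  exact le_mul_of_one_le_left (by positivity) h.one_le_count

lemma one_le_sqrt_succ (k P : ℕ) : 1 ≤ √(k * P + 1 : ℕ) :=
  Real.one_le_sqrt.mpr (Nat.one_le_cast.mpr (Nat.succ_pos _))

lemma sqrt_log_le (h : IsBlockScale d k P) : √(Real.log d) ≤ 1.5 / 10 ^ 4 * √d :=
  (le_mul_of_one_le_right (Real.sqrt_nonneg _) (one_le_sqrt_succ k P)).trans
    h.sqrt_log_mul_sqrt_succ_le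

lemma sqrt_succ_le (h : IsBlockScale d k P) : √(k * P + 1 : ℕ) ≤ 1.5 / 10 ^ 4 * √d :=
  (le_mul_of_one_le_left (Real.sqrt_nonneg _) (Real.one_le_sqrt.mpr h.one_le_log)).trans
    h.sqrt_log_mul_sqrt_succ_le

/-- The hard instance with blocks of length `k` in dimension `d`. The slope is a factor `√d` above
the accuracy `1 / d ^ 4`, and the margin is twice the deviation of a random sign vector along
`d ^ 2` directions. -/
noncomputable def params (h : IsBlockScale d k P) : HardParams where
  η := 1 / (d ^ 3 * √d)
  r := 1 / (100 * d * √d)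
  κ := 2 * (3 * √(Real.log d) / √d)
  k := k
  η_pos := by
    have := h.dim_pos
    positivity
  η_le := by
    have hsqrt := h.le_sqrt_dim
    exact one_div_le_one_div_of_le (by norm_num) ((show 4 ≤ √(d : ℝ) by linarith).trans
      (le_mul_of_one_le_left (by linarith) (one_le_pow₀ (by linarith [h.le_dim]))))
  r_pos := by
    have := h.dim_pos
    positivity
  r_le := by
    have := h.dim_pos
    rw [div_le_one (by positivity)]
    nlinarith [h.le_sqrt_dim, h.le_dim]
  κ_nonneg := by positivity
  κ_le := by
    rw [mul_div, div_le_iff₀ (by linarith [h.le_sqrt_dim])]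
    linarith [h.sqrt_log_le, h.le_sqrt_dim]
  k_pos := h.length_pos

lemma tail_le (h : IsBlockScale d k P) (hT : (T : ℝ) ≤ (d : ℝ) ^ 2) :
    ((T : ℝ) + 1) * (2 * Real.exp (-((3 * √(Real.log d)) ^ 2 / 2))) ≤ 1 / 4 := by
  have hd := h.dim_pos
  have hdim := h.le_dim
  have hexp : Real.exp (-((3 * √(Real.log d)) ^ 2 / 2)) ≤ ((d : ℝ) ^ 3)⁻¹ := by
    rw [← Real.exp_log (pow_pos hd 3), ← Real.exp_neg, Real.log_pow, mul_pow,
      Real.sq_sqrt (zero_le_one.trans h.one_le_log)]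
    exact Real.exp_le_exp.mpr (by push_cast; linarith [h.one_le_log])
  calc ((T : ℝ) + 1) * (2 * Real.exp (-((3 * √(Real.log d)) ^ 2 / 2)))
      ≤ ((d : ℝ) ^ 2 + d ^ 2) * (2 * ((d : ℝ) ^ 3)⁻¹) := by
        gcongr
        exact one_le_pow₀ (by linarith)
    _ = 4 / d := by field_simp; norm_num
    _ ≤ 1 / 4 := by
        rw [div_le_iff₀ hd]
        linarith

lemma net_le (h : IsBlockScale d k P) :
    2 * √(k : ℝ) / (1 / (100 * d * √d)) + 2 ≤ (d ^ 3 : ℕ) := by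
  have hd := h.dim_pos
  have hsqrt : √(k : ℝ) ≤ √d := Real.sqrt_le_sqrt (by linarith [h.length_le])
  calc 2 * √(k : ℝ) / (1 / (100 * d * √d)) + 2 = 200 * d * (√k * √d) + 2 := by
        rw [div_div_eq_mul_div, div_one]
        ring
    _ ≤ 200 * d * (√d * √d) + 2 := by gcongr
    _ = 200 * (d : ℝ) ^ 2 + 2 := by rw [Real.mul_self_sqrt hd.le]; ring
    _ ≤ (d ^ 3 : ℕ) := by
        push_cast
        nlinarith [h.le_dim, one_le_pow₀ (n := 2) (show (1 : ℝ) ≤ d by linarith [h.le_dim])]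

lemma eight_mul_cube_pow_le (h : IsBlockScale d k P) :
    8 * ((d ^ 3 : ℕ) : ℝ) ^ k ≤ Real.exp (6 * (k * Real.log d)) := by
  have hY := one_le_mul_of_one_le_of_one_le h.one_le_length h.one_le_log
  have height : (8 : ℝ) ≤ Real.exp 3 := by
    rw [← mul_one (3 : ℝ), ← Nat.cast_three, Real.exp_nat_mul]
    calc (8 : ℝ) = 2 ^ 3 := by norm_num
      _ ≤ Real.exp 1 ^ 3 := by
        gcongr
        linarith [Real.add_one_le_exp (1 : ℝ)]
  have hcube : ((d ^ 3 : ℕ) : ℝ) ^ k = Real.exp (3 * (k * Real.log d)) := by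
    rw [show 3 * (k * Real.log d) = (3 * k : ℕ) * Real.log d by push_cast; ring, Real.exp_nat_mul,
      Real.exp_log h.dim_pos, pow_mul, Nat.cast_pow]
  calc 8 * ((d ^ 3 : ℕ) : ℝ) ^ k ≤ Real.exp 3 * Real.exp (3 * (k * Real.log d)) := by
        gcongr
        exact hcube.le
    _ = Real.exp (3 + 3 * (k * Real.log d)) := (Real.exp_add _ _).symm
    _ ≤ Real.exp (6 * (k * Real.log d)) := Real.exp_le_exp.mpr (by linarith)

lemma pow_le (h : IsBlockScale d k P) :
    (0.76 : ℝ) ^ d ≤ 1 / (8 * ((d ^ 3 : ℕ) : ℝ) ^ k) := by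
  have hd : 0 < d := Nat.cast_pos.mp h.dim_pos
  have hbase : (0.76 : ℝ) ≤ Real.exp (-0.24) := by linarith [Real.add_one_le_exp (-0.24 : ℝ)]
  rw [le_div_iff₀ (by positivity)]
  calc (0.76 : ℝ) ^ d * (8 * ((d ^ 3 : ℕ) : ℝ) ^ k)
      ≤ Real.exp (-0.24) ^ d * Real.exp (6 * (k * Real.log d)) := by
        gcongr
        exact h.eight_mul_cube_pow_le
    _ = Real.exp (d * -0.24 + 6 * (k * Real.log d)) := by rw [Real.exp_add, Real.exp_nat_mul]
    _ ≤ 1 := Real.exp_le_one_iff.mpr (by linarith [h.length_mul_log_le])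

lemma dim_le (h : IsBlockScale d k P) : (d / 1000 + (k * P + 1)) * 64 ≤ d := by
  have hsucc : ((k * P + 1 : ℕ) : ℝ) * 1000 ≤ d := by linarith [h.succ_le, h.dim_pos]
  have : (k * P + 1) * 1000 ≤ d := by exact_mod_cast hsucc
  omega

lemma κ_mul_sqrt_le (h : IsBlockScale d k P) :
    2 * h.params.κ * √(k * P + 1 : ℕ) ≤ 1 / 8 := by
  have hsqrt : 0 < √(d : ℝ) := by linarith [h.le_sqrt_dim]
  calc 2 * h.params.κ * √(k * P + 1 : ℕ)
      = 12 * (√(Real.log d) * √(k * P + 1 : ℕ)) / √d := by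
        simp only [params]
        ring
    _ ≤ 1 / 8 := by
        rw [div_le_iff₀ hsqrt]
        linarith [h.sqrt_log_mul_sqrt_succ_le]

lemma r_mul_succ_le (h : IsBlockScale d k P) :
    h.params.r * (k * P + 1 : ℕ) ≤ 1 / 10 ^ 9 * (1 / √d) := by
  have hd := h.dim_pos
  calc h.params.r * (k * P + 1 : ℕ) = (k * P + 1 : ℕ) / (100 * d) * (1 / √d) := by
        simp only [params]
        field_simp
    _ ≤ 1 / 10 ^ 9 * (1 / √d) := by
        gcongr ?_ * _
        rw [div_le_iff₀ (by positivity)]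
        linarith [h.succ_le]

lemma accuracy_lt (h : IsBlockScale d k P) :
    1 / (d : ℝ) ^ 4 < h.params.η * (1 / (32 * √(k * P + 1 : ℕ)) - (5 * h.params.r +
      (10 * h.params.r * (k * P) + (2 * h.params.κ + 5 * h.params.r) * P))) := by
  have hd := h.dim_pos
  have hs : 0 < √(d : ℝ) := by linarith [h.le_sqrt_dim]
  have hN : 0 < √(k * P + 1 : ℕ) := by linarith [one_le_sqrt_succ k P]
  have haccuracy : 1 / (d : ℝ) ^ 4 = h.params.η * (1 / √d) := by
    simp only [params]
    rw [one_div_mul_one_div, mul_assoc, Real.mul_self_sqrt hd.le, ← pow_succ]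
  have hscale : 1 / √d ≤ 1.5 / 10 ^ 4 * (1 / √(k * P + 1 : ℕ)) := by
    rw [mul_one_div, div_le_div_iff₀ hs hN]
    linarith [h.sqrt_succ_le]
  have hmargin : 2 * h.params.κ * P ≤ 18 / 10 ^ 4 * (1 / √(k * P + 1 : ℕ)) := by
    simp only [params]
    rw [mul_one_div, le_div_iff₀ hN]
    have := h.count_mul_sqrt_log_mul_sqrt_succ_le
    field_simp
    linarith
  have hradius : 5 * h.params.r + 10 * h.params.r * (k * P) + 5 * h.params.r * P ≤
      20 * (h.params.r * (k * P + 1 : ℕ)) := by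
    have hP : (P : ℝ) ≤ k * P := le_mul_of_one_le_left P.cast_nonneg h.one_le_length
    have hr := h.params.r_pos
    have hrP := mul_le_mul_of_nonneg_left hP hr.le
    have : 0 ≤ h.params.r * P := by positivity
    push_cast
    linarith
  rw [haccuracy]
  refine mul_lt_mul_of_pos_left ?_ h.params.η_pos
  have hinv : 1 / (32 * √(k * P + 1 : ℕ)) = 1 / 32 * (1 / √(k * P + 1 : ℕ)) := by
    rw [one_div_mul_one_div]
  rw [hinv]
  linarith [h.r_mul_succ_le, one_div_pos.mpr hN]

lemma isAdmissible (h : IsBlockScale d k P) (hT : (T : ℝ) ≤ (d : ℝ) ^ 2) :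
    h.params.IsAdmissible d (d / 1000) P T (d ^ 3) (3 * √(Real.log d)) (1 / (d : ℝ) ^ 4) where
  t_nonneg := by positivity
  κ_eq := rfl
  tail_le := h.tail_le hT
  dim_le := h.dim_le
  net_le := h.net_le
  pow_le := h.pow_le
  κ_mul_sqrt_le := h.κ_mul_sqrt_le
  accuracy_lt := h.accuracy_lt

lemma ratio_eq (h : IsBlockScale d k P) : 8 * h.params.η * d / h.params.r = 800 / d := by
  have := h.dim_pos
  simp only [params]
  field_simp
  norm_num

lemma ratio_le_one (h : IsBlockScale d k P) : 8 * h.params.η * d / h.params.r ≤ 1 := by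
  rw [h.ratio_eq, div_le_one h.dim_pos]
  linarith [h.le_dim]

lemma ratio_le_exp (h : IsBlockScale d k P) :
    8 * h.params.η * d / h.params.r ≤ Real.exp (-(Real.log d / 2)) := by
  have hd := h.dim_pos
  have hsqrt := h.le_sqrt_dim
  rw [h.ratio_eq, ← Real.log_sqrt hd.le, Real.exp_neg, Real.exp_log (by linarith),
    div_le_iff₀ hd, ← div_eq_inv_mul, Real.div_sqrt]
  linarith

lemma mul_dim_le_sub_div (h : IsBlockScale d k P) :
    8 / 10 ^ 4 * (d : ℝ) ≤ (d / 1000 - d / 1000 / 10 : ℕ) := by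
  have hnat : d * 8 ≤ (d / 1000 - d / 1000 / 10) * 10 ^ 4 := by
    have : 10 ^ 17 ≤ d := by exact_mod_cast h.le_dim
    omega
  have : (d : ℝ) * 8 ≤ (d / 1000 - d / 1000 / 10 : ℕ) * 10 ^ 4 := by exact_mod_cast hnat
  linarith

lemma cast_div_div_le (d : ℕ) : ((d / 1000 / 10 : ℕ) : ℝ) ≤ d / 10 ^ 4 := by
  rw [Nat.div_div_eq_div_mul]
  exact_mod_cast Nat.cast_div_le

/- In units of `k * log d`, the summands are at most `12 * d / 10 ^ 8`, `d / 10 ^ 4`, `d / 10 ^ 4`,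
`1` and `-4 * d / 10 ^ 4`. -/
lemma code_exponent_neg (h : IsBlockScale d k P) (hM : (M : ℝ) ≤ k * Real.log d * d / 10 ^ 4) :
    (k * P + 1 : ℕ) * (6 * (k * Real.log d)) + (M + (d / 1000 / 10 : ℕ) * Real.log d +
      k * Real.log d + (d / 1000 - d / 1000 / 10 : ℕ) * (k * -(Real.log d / 2))) < 0 := by
  have hk := h.one_le_length
  have hlog := h.one_le_log
  have hd := h.le_dim
  set Y := k * Real.log d with hY
  have hlogY : Real.log d ≤ Y := le_mul_of_one_le_left (by linarith) hk
  have hprobes : (k * P + 1 : ℕ) * (6 * Y) ≤ 2 * d / 10 ^ 8 * (6 * Y) := by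
    gcongr
    exact h.succ_le
  have hcodes : (d / 1000 / 10 : ℕ) * Real.log d ≤ d / 10 ^ 4 * Y := by
    gcongr
    exact cast_div_div_le d
  have hrows : 8 / 10 ^ 4 * d * (Y / 2) ≤ (d / 1000 - d / 1000 / 10 : ℕ) * (Y / 2) := by
    gcongr
    exact h.mul_dim_le_sub_div
  have hdY : 10 ^ 17 * Y ≤ d * Y := by gcongr
  have hratio : (d / 1000 - d / 1000 / 10 : ℕ) * (k * -(Real.log d / 2)) =
      -((d / 1000 - d / 1000 / 10 : ℕ) * (Y / 2)) := by
    rw [hY]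
    ring
  rw [hratio]
  linarith

lemma code_count_lt_one (h : IsBlockScale d k P) (hM : (M : ℝ) ≤ k * Real.log d * d / 10 ^ 4) :
    (8 * ((d ^ 3 : ℕ) : ℝ) ^ k) ^ (k * P + 1) *
      (2 ^ M * (2 * (d / 1000 : ℕ) + 1 + (k * P + 1 : ℕ)) ^ (d / 1000 / 10) *
        (d / 1000 / 10 : ℕ) ^ k *
        ((8 * h.params.η * d / h.params.r) ^ k) ^ (d / 1000 - d / 1000 / 10)) < 1 := by
  have hd := h.dim_pos
  have hq : 0 < 8 * h.params.η * d / h.params.r := by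
    rw [h.ratio_eq]
    positivity
  have hn : ((d / 1000 : ℕ) : ℝ) ≤ d / 1000 := by exact_mod_cast Nat.cast_div_le
  have hpieces : 2 * ((d / 1000 : ℕ) : ℝ) + 1 + (k * P + 1 : ℕ) ≤ Real.exp (Real.log d) := by
    rw [Real.exp_log hd]
    linarith [h.le_dim, h.succ_le]
  have hsteps : ((d / 1000 / 10 : ℕ) : ℝ) ≤ Real.exp (Real.log d) := by
    rw [Real.exp_log hd]
    linarith [cast_div_div_le d]
  set m := d / 1000 / 10
  set n := d / 1000
  calc _ ≤ Real.exp (6 * (k * Real.log d)) ^ (k * P + 1) *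
        (Real.exp 1 ^ M * Real.exp (Real.log d) ^ m * Real.exp (Real.log d) ^ k *
          (Real.exp (-(Real.log d / 2)) ^ k) ^ (n - m)) := by
        gcongr
        · exact h.eight_mul_cube_pow_le
        · linarith [Real.add_one_le_exp (1 : ℝ)]
        · exact h.ratio_le_exp
    _ = Real.exp ((k * P + 1 : ℕ) * (6 * (k * Real.log d)) + (M + m * Real.log d + k * Real.log d +
        (n - m : ℕ) * (k * -(Real.log d / 2)))) := by
        simp only [Real.exp_add, Real.exp_nat_mul, Real.exp_one_pow]
    _ < 1 := Real.exp_lt_one_iff.mpr (h.code_exponent_neg hM)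

lemma succ_le_of_minimizesConvex (h : IsBlockScale d k P) (hT : (T : ℝ) ≤ (d : ℝ) ^ 2)
    {alg : MemAlg M (EuclideanSpace ℝ (Fin d)) (ℝ × EuclideanSpace ℝ (Fin d))}
    (hmin : MinimizesConvex d alg T (1 / (d : ℝ) ^ 4)) : k * P + 1 ≤ T := by
  have : NeZero d := ⟨(Nat.cast_pos.mp h.dim_pos).ne'⟩
  rcases T.eq_zero_or_pos with rfl | hTpos
  · have hone : ((1 : ℕ) : ℝ) ≤ (d : ℝ) ^ 2 := by
      exact_mod_cast Nat.one_le_pow _ _ (NeZero.pos d)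
    have := (h.isAdmissible hone).succ_le_of_minimizesConvex one_pos hmin
    have := Nat.mul_pos h.length_pos h.count_pos
    simp only [params] at *
    omega
  · exact (h.isAdmissible hT).succ_le_of_minimizesConvex hTpos hmin

lemma mul_le_of_minimizesConvex (h : IsBlockScale d k P) (hT : (T : ℝ) ≤ (d : ℝ) ^ 2)
    {alg : MemAlg M (EuclideanSpace ℝ (Fin d)) (ℝ × EuclideanSpace ℝ (Fin d))}
    (hmin : MinimizesConvex d alg T (1 / (d : ℝ) ^ 4))
    (hM : (M : ℝ) ≤ k * Real.log d * d / 10 ^ 4) : P * (d / 1000 / 10) ≤ T := by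
  have : NeZero d := ⟨(Nat.cast_pos.mp h.dim_pos).ne'⟩
  by_contra! hlt
  exact ((h.isAdmissible hT).one_le_of_le_mul
    (Nat.zero_lt_of_lt (h.succ_le_of_minimizesConvex hT hmin)) hmin h.ratio_le_one
    (Nat.div_le_self _ _) hlt.le).not_gt (h.code_count_lt_one hM)

end IsBlockScale

/-! ### The trade-off -/

lemma exists_pos_nat_le_mul_le_add {a b : ℝ} (ha : 0 ≤ a) (hb : 0 < b) :
    ∃ k : ℕ, 0 < k ∧ a ≤ k * b ∧ k * b ≤ a + b := by
  refine ⟨⌊a / b⌋₊ + 1, Nat.succ_pos _, ?_, ?_⟩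
  · rw [← div_le_iff₀ hb]
    exact_mod_cast (Nat.lt_floor_add_one (a / b)).le
  · rw [Nat.cast_succ, add_one_mul]
    gcongr
    exact (le_div_iff₀ hb).mp (Nat.floor_le (by positivity))

lemma mul_log_le_self_of_le {x : ℝ} (hx : 10 ^ 17 ≤ x) : 10 ^ 8 * Real.log x ≤ x := by
  have hpos : 0 < x := lt_of_lt_of_le (by norm_num) hx
  have hsqrt : 2 * 10 ^ 8 ≤ √x := Real.le_sqrt_of_sq_le (le_trans (by norm_num) hx)
  have hlog : Real.log x ≤ 2 * √x := by
    have := Real.log_le_sub_one_of_pos (Real.sqrt_pos.mpr hpos)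
    rw [Real.log_sqrt hpos.le] at this
    linarith
  calc 10 ^ 8 * Real.log x ≤ 2 * 10 ^ 8 * √x := by linarith
    _ ≤ √x * √x := by gcongr
    _ = x := Real.mul_self_sqrt hpos.le

section LowerBounds

variable {d M T : ℕ}
  {alg : MemAlg M (EuclideanSpace ℝ (Fin d)) (ℝ × EuclideanSpace ℝ (Fin d))}

lemma div_log_le_of_minimizesConvex (hd : (10 : ℝ) ^ 17 ≤ d) (hT : (T : ℝ) ≤ (d : ℝ) ^ 2)
    (hmin : MinimizesConvex d alg T (1 / (d : ℝ) ^ 4)) :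
    d / (10 ^ 8 * Real.log d) ≤ T := by
  have hlog : 0 < 10 ^ 8 * Real.log d := by
    linarith [one_le_log_of_three_le (show (3 : ℝ) ≤ d by linarith)]
  set k := ⌊d / (10 ^ 8 * Real.log d)⌋₊
  have hk : 0 < k := Nat.floor_pos.mpr ((one_le_div hlog).mpr (mul_log_le_self_of_le hd))
  have hlength : k * (10 ^ 8 * Real.log d) ≤ d :=
    (le_div_iff₀ hlog).mp (Nat.floor_le (by positivity))
  have hscale : IsBlockScale d k 1 := by
    refine ⟨hd, hk, one_pos, ?_⟩
    rw [Nat.cast_one, one_pow, one_mul, le_div_iff₀ (by norm_num)]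
    linarith
  have hqueries : ((k * 1 + 1 : ℕ) : ℝ) ≤ T :=
    Nat.cast_le.mpr (hscale.succ_le_of_minimizesConvex hT hmin)
  rw [mul_one, Nat.cast_succ] at hqueries
  exact (Nat.lt_floor_add_one _).le.trans hqueries

lemma mul_le_of_memory_le (hd : (10 : ℝ) ^ 17 ≤ d) (hT : (T : ℝ) ≤ (d : ℝ) ^ 2)
    (hmin : MinimizesConvex d alg T (1 / (d : ℝ) ^ 4)) {k : ℕ} (hk : 0 < k)
    (hM : (M : ℝ) ≤ k * Real.log d * d / 10 ^ 4) {y : ℝ} (hy : 1 ≤ y)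
    (hyk : y ^ 3 * k * Real.log d ≤ d / 10 ^ 8) : d * y / 10 ^ 10 ≤ T := by
  have hP : 0 < ⌊y⌋₊ := Nat.floor_pos.mpr hy
  have hscale : IsBlockScale d k ⌊y⌋₊ := by
    refine ⟨hd, hk, hP, le_trans ?_ hyk⟩
    gcongr
    exact Nat.floor_le (by linarith)
  have hcount : y / 2 ≤ ⌊y⌋₊ := by
    have : (1 : ℝ) ≤ ⌊y⌋₊ := Nat.one_le_cast.mpr hP
    linarith [Nat.lt_floor_add_one y]
  have hsteps : (d : ℝ) / 20000 ≤ (d / 1000 / 10 : ℕ) := by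
    have : (d : ℝ) ≤ (d / 1000 / 10 : ℕ) * 10000 + 10000 := by
      exact_mod_cast (show d ≤ (d / 1000 / 10) * 10000 + 10000 by omega)
    linarith
  calc d * y / 10 ^ 10 ≤ y / 2 * (d / 20000) := by
        have : (0 : ℝ) ≤ d * y := by positivity
        linarith
    _ ≤ ⌊y⌋₊ * (d / 1000 / 10 : ℕ) := by gcongr
    _ ≤ T := by exact_mod_cast hscale.mul_le_of_minimizesConvex hT hmin hM

lemma le_mul_mul_of_memory {D M K u v y : ℝ} (hD : 0 < D) (hv : 1 ≤ v) (hy : 0 ≤ y) (hu : 0 ≤ u)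
    (hcube : u ^ 3 ≤ D) (hM : M * u ^ 3 ≤ D ^ 2) (hK : K * (D * v ^ 3) ≤ 10 ^ 4 * M + D * v ^ 3)
    (hyK : y ^ 3 * K * v ^ 3 = D / 10 ^ 8) : u ≤ 10 ^ 5 * (v * y) := by
  have hv3 : 1 ≤ v ^ 3 := one_le_pow₀ hv
  have hlength : K * v ^ 3 * u ^ 3 ≤ 10001 * (D * v ^ 3) := by
    refine le_of_mul_le_mul_right ?_ hD
    calc K * v ^ 3 * u ^ 3 * D = K * (D * v ^ 3) * u ^ 3 := by ring
      _ ≤ (10 ^ 4 * M + D * v ^ 3) * u ^ 3 := by gcongr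
      _ = 10 ^ 4 * (M * u ^ 3) + D * v ^ 3 * u ^ 3 := by ring
      _ ≤ 10 ^ 4 * (D ^ 2 * v ^ 3) + D * v ^ 3 * D := by
        gcongr 10 ^ 4 * ?_ + D * v ^ 3 * ?_
        exact hM.trans (le_mul_of_one_le_right (by positivity) hv3)
      _ = 10001 * (D * v ^ 3) * D := by ring
  refine le_of_pow_le_pow_left₀ three_ne_zero (by positivity) (le_of_mul_le_mul_left ?_ hD)
  calc D * u ^ 3 = 10 ^ 8 * (y ^ 3 * (K * v ^ 3 * u ^ 3)) := by
        linear_combination -10 ^ 8 * u ^ 3 * hyK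
    _ ≤ 10 ^ 8 * (y ^ 3 * (10001 * (D * v ^ 3))) := by gcongr
    _ = 10 ^ 8 * 10001 * (D * (v * y) ^ 3) := by ring
    _ ≤ 10 ^ 15 * (D * (v * y) ^ 3) := by
      have : 0 ≤ v := by linarith
      gcongr
      norm_num
    _ = D * (10 ^ 5 * (v * y)) ^ 3 := by ring

lemma rate_le_of_queries_le (hd : (10 : ℝ) ^ 17 ≤ d) (hT : (T : ℝ) ≤ (d : ℝ) ^ 2)
    (hmin : MinimizesConvex d alg T (1 / (d : ℝ) ^ 4)) {u v : ℝ} (hu : 0 ≤ u)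
    (hcube : u ^ 3 ≤ d) (hv : 1 ≤ v) (hlog : v ^ 3 = Real.log d)
    (hM : (M : ℝ) * u ^ 3 ≤ (d : ℝ) ^ 2) :
    1 / 10 ^ 15 * (d * u) / v ^ 5 ≤ T := by
  have hd0 : (0 : ℝ) < d := by linarith
  obtain ⟨k, hk, hMk, hkM⟩ := exists_pos_nat_le_mul_le_add (a := 10 ^ 4 * M) (b := d * v ^ 3)
    (by positivity) (by positivity)
  obtain ⟨y, hy, hcbrt⟩ : ∃ y : ℝ, 0 ≤ y ∧ y ^ 3 = d / (10 ^ 8 * (k * v ^ 3)) :=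
    ⟨_, by positivity, Real.rpow_inv_natCast_pow (by positivity) three_ne_zero⟩
  have hyk : y ^ 3 * k * v ^ 3 = d / 10 ^ 8 := by
    rw [hcbrt]
    field_simp
  have huy := le_mul_mul_of_memory hd0 hv hy hu hcube hM hkM hyk
  rcases le_or_gt 1 y with hy1 | hy1
  · refine le_trans ?_ (mul_le_of_memory_le hd hT hmin hk (by rw [← hlog]; linarith) hy1
      (by rw [← hlog]; exact hyk.le))
    rw [div_le_iff₀ (by positivity)]
    calc 1 / 10 ^ 15 * (d * u) ≤ 1 / 10 ^ 15 * (d * (10 ^ 5 * (v * y))) := by gcongr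
      _ = d * y / 10 ^ 10 * v := by ring
      _ ≤ d * y / 10 ^ 10 * v ^ 5 := by
        gcongr
        exact le_self_pow₀ hv (by norm_num)
  · refine le_trans ?_ (div_log_le_of_minimizesConvex hd hT hmin)
    rw [div_le_div_iff₀ (by positivity) (by rw [← hlog]; positivity), ← hlog]
    calc 1 / 10 ^ 15 * (d * u) * (10 ^ 8 * v ^ 3)
        ≤ 1 / 10 ^ 15 * (d * (10 ^ 5 * (v * 1))) * (10 ^ 8 * v ^ 3) := by
          gcongr
          exact huy.trans (by gcongr)
      _ = 1 / 10 ^ 2 * (d * v ^ 4) := by ring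
      _ ≤ 1 * (d * v ^ 5) := by
          gcongr
          · norm_num
          · norm_num
      _ = d * v ^ 5 := one_mul _

lemma rate_le_of_minimizesConvex (hd : (10 : ℝ) ^ 17 ≤ d)
    (hmin : MinimizesConvex d alg T (1 / (d : ℝ) ^ 4)) {u v : ℝ} (hu : 0 ≤ u)
    (hcube : u ^ 3 ≤ d) (hv : 1 ≤ v) (hlog : v ^ 3 = Real.log d)
    (hM : (M : ℝ) * u ^ 3 ≤ (d : ℝ) ^ 2) :
    1 / 10 ^ 15 * (d * u) / v ^ 5 ≤ T := by
  rcases le_or_gt (T : ℝ) ((d : ℝ) ^ 2) with hT | hT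
  · exact rate_le_of_queries_le hd hT hmin hu hcube hv hlog hM
  have hd1 : (1 : ℝ) ≤ d := by linarith
  have hud : u ≤ d := le_of_pow_le_pow_left₀ three_ne_zero (by linarith)
    (hcube.trans (le_self_pow₀ hd1 three_ne_zero))
  refine le_trans ?_ hT.le
  calc 1 / 10 ^ 15 * (d * u) / v ^ 5 ≤ 1 / 10 ^ 15 * (d * u) :=
        div_le_self (by positivity) (one_le_pow₀ hv)
    _ ≤ d * u := mul_le_of_le_one_left (by positivity) (by norm_num)
    _ ≤ (d : ℝ) ^ 2 := by
        rw [pow_two]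
        gcongr

end LowerBounds

theorem convex_optimization_memory_query_tradeoff_general :
    ∃ c : ℝ, 0 < c ∧ ∃ d₀ : ℕ, ∀ d : ℕ, d₀ ≤ d → ∀ δ : ℝ, δ ≤ 1 →
      ∀ M T : ℕ,
        ∀ alg : MemAlg M (EuclideanSpace ℝ (Fin d)) (ℝ × EuclideanSpace ℝ (Fin d)),
          MinimizesConvex d alg T (1 / (d : ℝ) ^ 4) →
            (d : ℝ) ^ ((2 : ℝ) - δ) ≤ (M : ℝ) ∨
              c * (d : ℝ) ^ ((1 : ℝ) + δ / 3) / Real.log d ^ ((5 : ℝ) / 3) ≤ (T : ℝ) := by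
  obtain ⟨d₀, hd₀⟩ := exists_nat_ge ((10 : ℝ) ^ 17)
  refine ⟨1 / 10 ^ 15, by positivity, d₀, fun d hdd δ hδ M T alg hmin ↦ or_iff_not_imp_left.mpr
    fun hM ↦ ?_⟩
  have hd : (10 : ℝ) ^ 17 ≤ d := hd₀.trans (Nat.cast_le.mpr hdd)
  have hd0 : (0 : ℝ) < d := by linarith
  have hlog : 1 ≤ Real.log d := one_le_log_of_three_le (by linarith)
  have hgain : ((d : ℝ) ^ (δ / 3)) ^ 3 = (d : ℝ) ^ δ := by
    rw [← Real.rpow_mul_natCast hd0.le, Nat.cast_ofNat, div_mul_cancel₀ δ three_ne_zero]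
  have hcube : ((d : ℝ) ^ (δ / 3)) ^ 3 ≤ d :=
    hgain.trans_le (Real.rpow_le_self_of_one_le (by linarith) hδ)
  have hmemory : (M : ℝ) * ((d : ℝ) ^ (δ / 3)) ^ 3 ≤ (d : ℝ) ^ 2 := by
    rw [hgain, ← le_div_iff₀ (by positivity), ← Real.rpow_natCast, ← Real.rpow_sub hd0]
    exact_mod_cast (not_le.mp hM).le
  have hroot : (Real.log d ^ ((1 : ℝ) / 3)) ^ 3 = Real.log d := by
    rw [← Real.rpow_mul_natCast (by linarith), Nat.cast_ofNat, div_mul_cancel₀ 1 three_ne_zero,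
      Real.rpow_one]
  have hrate := rate_le_of_minimizesConvex hd hmin (by positivity) hcube
    (Real.one_le_rpow hlog (by norm_num)) hroot hmemory
  rw [← Real.rpow_mul_natCast (by linarith), Nat.cast_ofNat, one_div_mul_eq_div (3 : ℝ) 5] at hrate
  rwa [Real.rpow_add hd0, Real.rpow_one]

/-- To minimize `1`-Lipschitz convex functions over the unit ball to accuracy `1/d⁴`,
any deterministic first-order algorithm either uses at least `d^{2-δ}` bits of memory or
makes at least `Ω(d^{1+δ/3} / (log d)^{5/3})` queries. -/
theorem convex_optimization_memory_query_tradeoff :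
    ∃ c : ℝ, 0 < c ∧ ∃ d₀ : ℕ, ∀ d : ℕ, d₀ ≤ d → ∀ δ : ℝ, 0 ≤ δ → δ ≤ 1 →
      ∀ M T : ℕ,
        ∀ alg : MemAlg M (EuclideanSpace ℝ (Fin d)) (ℝ × EuclideanSpace ℝ (Fin d)),
          MinimizesConvex d alg T (1 / (d : ℝ) ^ 4) →
            (d : ℝ) ^ ((2 : ℝ) - δ) ≤ (M : ℝ) ∨
              c * (d : ℝ) ^ ((1 : ℝ) + δ / 3) / Real.log d ^ ((5 : ℝ) / 3) ≤ (T : ℝ) := by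
  obtain ⟨c, hc, d₀, h⟩ := convex_optimization_memory_query_tradeoff_general
  exact ⟨c, hc, d₀, fun d hd δ _ ↦ h d hd δ⟩
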